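/- Let n ≥ 3, let A ⊆ M_n(ℂ) be a block upper-triangular subalgebra, and let φ : A → A be a continuous injective map which preserves commutativity and shrinks the spectrum, i.e. σ(φ(X)) ⊆ σ(X) for all X ∈ A. Then one of the following holds: (a) there exists an invertible T ∈ A such that φ(X) = T X T⁻¹ for all X ∈ A; or (b) A^⊙ = A and there exists an invertible T ∈ A such that φ(X) = T X^⊙ T⁻¹ for all X ∈ A, where X^⊙ := J Xᵗ J and J is the exchange matrix (J_{ij} = 1 iff i + j = n + 1). -/

import Mathlib

open Matrix

noncomputable section

/-- The block index function: `blockIdx k i` is the index `s` (0-based) of the diagonal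
block containing row/column `i`, for block sizes given by the list `k`. -/
def blockIdx (k : List ℕ) (i : ℕ) : ℕ :=
  ((Finset.range k.length).filter (fun s => (k.take (s + 1)).sum ≤ i)).card

/-- The block upper-triangular algebra `𝒜_{k₁,…,k_r} ⊆ M_n(ℂ)` determined by the
list of block sizes `k`. -/
def blockAlg (n : ℕ) (k : List ℕ) : Set (Matrix (Fin n) (Fin n) ℂ) :=
  { X | ∀ i j : Fin n, blockIdx k (j : ℕ) < blockIdx k (i : ℕ) → X i j = 0 }

/-- A subset of `M_n(ℂ)` is a block upper-triangular subalgebra if it is of the form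
`blockAlg n k` for some list `k` of positive integers summing to `n`. -/
def IsBlockUT (n : ℕ) (𝒜 : Set (Matrix (Fin n) (Fin n) ℂ)) : Prop :=
  ∃ k : List ℕ, (∀ m ∈ k, 0 < m) ∧ k.sum = n ∧ 𝒜 = blockAlg n k

/-- The exchange matrix `J` (ones on the antidiagonal). -/
def exchMat (n : ℕ) : Matrix (Fin n) (Fin n) ℂ :=
  Matrix.of fun i j => if (i : ℕ) + (j : ℕ) + 1 = n then 1 else 0

/-! A block upper-triangular algebra is the set of `X` with `X.BlockTriangular b`, for a monotone
`b`.

On the complement of the discriminant hypersurface, which is dense and connected in the algebra,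
`spectrum (φ X) ⊆ spectrum X` forces equality of characteristic polynomials as soon as `φ X` has
simple spectrum, and by continuity this propagates from one such point. There is one because an
injective continuous image of the algebra in itself cannot be a null set (a weak invariance of
domain, obtained from Brouwer's theorem), whereas the hypersurface is one. Hence `φ` preserves
characteristic polynomials.

The diagonal matrices commute, so after a conjugation `φ` fixes all of them. Then `φ` maps rank-one
idempotents to such, is homogeneous on their multiples and preserves their orthogonality. It sends
each line `Eᵢᵢ + ℂ Eᵢⱼ` into itself or into its transpose; for `n ≥ 3` orthogonality makes the
choice the same for all `i` and `j`, and composing with the transpose we may assume the former.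
Orthogonality of two idempotents is one equation between their coefficients; its preservation makes
the action on these lines additive and multiplicative and thus, by continuity,
`t ↦ c i / c j * t`, which is conjugation by `diagonal c`. After undoing it `φ` fixes every
rank-one idempotent, hence every diagonalizable matrix with simple spectrum, hence everything by
density.

Finally, let conjugation by `T` map the algebra of `b'` into that of `b`, both functions being
monotone. A permutation supporting a nonzero term of `det T` or `det T⁻¹` yields enough nonzero
entries to conclude that `T` lies in the algebra of `b`, and that the algebra of `b'` does, too.
With `b'` the reversal of `b` this gives the statement about `X ↦ J Xᵗ J`. -/

section Brouwer

open Metric Set MeasureTheory Filter Topology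
open scoped RealInnerProductSpace

theorem exists_polynomial_eval_eq_det_one_add_smul {R M : Type*} [CommRing R] [Nontrivial R]
    [AddCommGroup M] [Module R M] [Module.Free R M] [Module.Finite R M] (A : Module.End R M) :
    ∃ q : Polynomial R, q.natDegree ≤ Module.finrank R M ∧
      ∀ t, q.eval t = LinearMap.det (1 + t • A) := by
  let B := Module.finBasis R M
  refine ⟨det ((Polynomial.X : Polynomial R) • (LinearMap.toMatrix B B A).map Polynomial.C +
    (1 : Matrix _ _ R).map Polynomial.C), ?_, fun t => ?_⟩
  · refine (Polynomial.natDegree_det_X_add_C_le _ _).trans ?_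
    rw [Fintype.card_fin]
  · rw [← LinearMap.det_toMatrix B, ← Polynomial.coe_evalRingHom, RingHom.map_det]
    congr 1
    ext i j
    rw [RingHom.mapMatrix_apply, Matrix.map_apply, Matrix.add_apply, Matrix.smul_apply,
      Matrix.map_apply, Matrix.map_apply, smul_eq_mul, Polynomial.coe_evalRingHom,
      Polynomial.eval_add, Polynomial.eval_mul, Polynomial.eval_X, Polynomial.eval_C,
      Polynomial.eval_C, map_add,
      map_smul, LinearMap.toMatrix_one, Matrix.add_apply, Matrix.smul_apply, smul_eq_mul]
    ring

/-- The integral of a family of polynomials of bounded degree is the Lagrange interpolation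
polynomial of its own values. -/
theorem exists_polynomial_eval_eq_integral {α : Type*} [MeasurableSpace α] {μ : Measure α}
    {p : α → Polynomial ℝ} {N : ℕ} (hdeg : ∀ x, (p x).natDegree ≤ N)
    (hint : ∀ t, Integrable (fun x => (p x).eval t) μ) :
    ∃ Q : Polynomial ℝ, ∀ t, Q.eval t = ∫ x, (p x).eval t ∂μ := by
  let s := Finset.range (N + 1)
  let v : ℕ → ℝ := fun j => j
  have hv : InjOn v s := Nat.cast_injective.injOn
  refine ⟨Lagrange.interpolate s v fun j => ∫ x, (p x).eval (v j) ∂μ, fun t => ?_⟩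
  have hinterp : ∀ x, (p x).eval t = ∑ j ∈ s, (p x).eval (v j) * (Lagrange.basis s v j).eval t := by
    intro x
    have hlt : (p x).degree < s.card := by
      rw [Finset.card_range]
      exact Polynomial.degree_le_natDegree.trans_lt (mod_cast Nat.lt_succ_of_le (hdeg x))
    conv_lhs => rw [Lagrange.eq_interpolate hv hlt]
    simp [Lagrange.interpolate_apply, Polynomial.eval_finsetSum]
  simp_rw [hinterp]
  rw [integral_finsetSum _ fun j _ => (hint _).mul_const _]
  simp [Lagrange.interpolate_apply, Polynomial.eval_finsetSum, integral_mul_const]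

section NormedSpace

variable {E : Type*} [NormedAddCommGroup E] [NormedSpace ℝ E]

theorem injOn_add_smul_of_norm_image_sub_le {g : E → E} {s : Set E} {C t : ℝ}
    (hg : ∀ x ∈ s, ∀ y ∈ s, ‖g x - g y‖ ≤ C * ‖x - y‖) (ht : 0 ≤ t) (htC : t * C < 1) :
    InjOn (fun x => x + t • g x) s := by
  intro x hx y hy hxy
  by_contra hne
  have hpos : 0 < ‖x - y‖ := norm_sub_pos_iff.2 hne
  have hsub : x - y = t • (g y - g x) := by
    rw [smul_sub, sub_eq_sub_iff_add_eq_add, add_comm (t • g y)]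
    exact hxy
  have hle : ‖x - y‖ ≤ t * (C * ‖x - y‖) := by
    calc ‖x - y‖ = t * ‖g y - g x‖ := by rw [hsub, norm_smul, Real.norm_of_nonneg ht]
      _ ≤ t * (C * ‖x - y‖) := by
        gcongr
        rw [norm_sub_rev x y]
        exact hg y hy x hx
  nlinarith

theorem image_ball_eq_ball_of_eqOn_sphere {f : E → E} (hf : ContinuousOn f (closedBall 0 1))
    (hmaps : MapsTo f (ball 0 1) (ball 0 1)) (hopen : IsOpen (f '' ball 0 1))
    (hcompact : IsCompact (closedBall (0 : E) 1)) (hsphere : ∀ x, ‖x‖ = 1 → f x = x) :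
    f '' ball 0 1 = ball 0 1 := by
  have hclosed : IsClosed (f '' closedBall 0 1) := (hcompact.image_of_continuousOn hf).isClosed
  refine Subset.antisymm hmaps.image_subset ?_
  have hball : (f '' ball 0 1) ⊆ f '' closedBall 0 1 := image_mono ball_subset_closedBall
  have hboundary : ball 0 1 ∩ f '' closedBall 0 1 ⊆ f '' ball 0 1 := by
    rintro _ ⟨hfx, x, hx, rfl⟩
    rw [mem_closedBall_zero_iff] at hx
    rcases hx.lt_or_eq with hlt | heq
    · exact ⟨x, mem_ball_zero_iff.2 hlt, rfl⟩
    · rw [hsphere x heq, mem_ball_zero_iff] at hfx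
      exact absurd heq hfx.ne
  refine (convex_ball (0 : E) 1).isPreconnected.subset_left_of_subset_union hopen
    hclosed.isOpen_compl (disjoint_compl_right.mono_left hball) (fun y hy => ?_)
    ⟨f 0, hmaps (by simp), 0, by simp, rfl⟩
  by_cases hyc : y ∈ f '' closedBall 0 1
  · exact Or.inl (hboundary ⟨hy, hyc⟩)
  · exact Or.inr hyc

variable [FiniteDimensional ℝ E]

theorem det_id_add_smul_pos {A : E →L[ℝ] E} {t : ℝ} (ht : 0 ≤ t) (htA : t * ‖A‖ < 1) :
    0 < (ContinuousLinearMap.id ℝ E + t • A).det := by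
  have := FiniteDimensional.complete ℝ E
  have hne : ∀ s ∈ Icc 0 t, (ContinuousLinearMap.id ℝ E + s • A).det ≠ 0 := by
    intro s hs
    have hnorm : ‖-(s • A)‖ < 1 := by
      rw [norm_neg, norm_smul, Real.norm_of_nonneg hs.1]
      exact (mul_le_mul_of_nonneg_right hs.2 (norm_nonneg A)).trans_lt htA
    have hunit := isUnit_one_sub_of_norm_lt_one hnorm
    rw [sub_neg_eq_add] at hunit
    exact (LinearMap.isUnit_iff_isUnit_det _).1
      (hunit.map (ContinuousLinearMap.toLinearMapRingHom : (E →L[ℝ] E) →+* (E →ₗ[ℝ] E))) |>.ne_zero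
  have hcont : ContinuousOn (fun s : ℝ => (ContinuousLinearMap.id ℝ E + s • A).det) (Icc 0 t) :=
    (ContinuousLinearMap.continuous_det.comp (by fun_prop)).continuousOn
  by_contra! hneg
  obtain ⟨s, hs, hs0⟩ := intermediate_value_Icc' ht hcont
    ⟨hneg, by simp [ContinuousLinearMap.det]⟩
  exact hne s hs hs0

theorem isOpen_image_of_det_fderiv_ne_zero {f : E → E} {f' : E → E →L[ℝ] E} {s : Set E}
    (hs : IsOpen s) (hf : ∀ x ∈ s, HasStrictFDerivAt f (f' x) x) (hdet : ∀ x ∈ s, (f' x).det ≠ 0) :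
    IsOpen (f '' s) := by
  have := FiniteDimensional.complete ℝ E
  rw [isOpen_iff_mem_nhds]
  rintro _ ⟨x, hx, rfl⟩
  rw [← (hf x hx).map_nhds_eq_of_surj (LinearMap.range_eq_top.2
    (LinearMap.equivOfDetNeZero (f' x : E →ₗ[ℝ] E) (hdet x hx)).surjective)]
  exact image_mem_map (hs.mem_nhds hx)

variable [MeasurableSpace E] [BorelSpace E]

/-- For small `t` the map `x ↦ x + t • g x` permutes the open ball, so its Jacobian integrates
to the volume of the ball. -/
theorem integral_det_id_add_smul_eq_volume (μ : Measure E) [μ.IsAddHaarMeasure] {g : E → E}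
    {g' : E → E →L[ℝ] E} {C t : ℝ} (hg : ∀ x ∈ closedBall (0 : E) 1, HasStrictFDerivAt g (g' x) x)
    (hC : ∀ x ∈ closedBall (0 : E) 1, ‖g' x‖ ≤ C) (hsphere : ∀ x, ‖x‖ = 1 → g x = 0)
    (hball : ∀ x ∈ closedBall (0 : E) 1, ‖x + g x‖ ≤ 1)
    (ht0 : 0 ≤ t) (ht1 : t < 1) (htC : t * C < 1) :
    ∫ x in ball (0 : E) 1, (ContinuousLinearMap.id ℝ E + t • g' x).det ∂μ =
      μ.real (ball (0 : E) 1) := by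
  have hsub : ball (0 : E) 1 ⊆ closedBall 0 1 := ball_subset_closedBall
  let f : E → E := fun x => x + t • g x
  let f' : E → E →L[ℝ] E := fun x => ContinuousLinearMap.id ℝ E + t • g' x
  have hf : ∀ x ∈ closedBall (0 : E) 1, HasStrictFDerivAt f (f' x) x := fun x hx =>
    (hasStrictFDerivAt_id x).add ((hg x hx).const_smul t)
  have hdet : ∀ x ∈ ball (0 : E) 1, 0 < (f' x).det := fun x hx =>
    det_id_add_smul_pos ht0 ((mul_le_mul_of_nonneg_left (hC x (hsub hx)) ht0).trans_lt htC)
  have hinj : InjOn f (closedBall 0 1) := by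
    refine injOn_add_smul_of_norm_image_sub_le (fun x hx y hy => ?_) ht0 htC
    exact (convex_closedBall (0 : E) 1).norm_image_sub_le_of_norm_hasFDerivWithin_le
      (fun z hz => (hg z hz).hasFDerivAt.hasFDerivWithinAt) hC hy hx
  have hmaps : MapsTo f (ball 0 1) (ball 0 1) := by
    intro x hx
    have hgx := hball x (hsub hx)
    rw [mem_ball_zero_iff] at hx ⊢
    calc ‖f x‖ = ‖(1 - t) • x + t • (x + g x)‖ := by congr 1; simp only [f]; module
      _ ≤ ‖(1 - t) • x‖ + ‖t • (x + g x)‖ := norm_add_le _ _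
      _ = (1 - t) * ‖x‖ + t * ‖x + g x‖ := by
        rw [norm_smul, norm_smul, Real.norm_of_nonneg ht0, Real.norm_of_nonneg (by linarith)]
      _ < 1 := by nlinarith
  have himage : f '' ball 0 1 = ball 0 1 :=
    image_ball_eq_ball_of_eqOn_sphere
      (fun x hx => (hf x hx).hasFDerivAt.continuousAt.continuousWithinAt) hmaps
      (isOpen_image_of_det_fderiv_ne_zero isOpen_ball (fun x hx => hf x (hsub hx))
        fun x hx => (hdet x hx).ne')
      (isCompact_closedBall 0 1) fun x hx => by simp [f, hsphere x hx]
  have hchange := integral_image_eq_integral_abs_det_fderiv_smul μ measurableSet_ball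
    (fun x hx => (hf x (hsub hx)).hasFDerivAt.hasFDerivWithinAt) (hinj.mono hsub) (fun _ => (1 : ℝ))
  rw [himage] at hchange
  simp only [smul_eq_mul, mul_one, integral_const, measureReal_restrict_apply_univ] at hchange
  rw [hchange]
  exact setIntegral_congr_fun measurableSet_ball fun x hx => (abs_of_pos (hdet x hx)).symm

end NormedSpace

variable {E : Type*} [NormedAddCommGroup E] [InnerProductSpace ℝ E]

theorem inner_lt_one_of_ne {x y : E} (hx : ‖x‖ = 1) (hy : ‖y‖ ≤ 1) (hxy : y ≠ x) :
    ⟪x, y⟫ < 1 := by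
  have hpos : 0 < ‖x - y‖ ^ 2 := by
    have := norm_sub_pos_iff.2 hxy.symm
    positivity
  rw [norm_sub_sq_real, hx] at hpos
  nlinarith [norm_nonneg y]

theorem one_sub_inner_smul_sub_ne_zero {x y : E} (hx : ‖x‖ ≤ 1) (hy : ‖y‖ ≤ 1) (hxy : y ≠ x) :
    (1 - ⟪x, y⟫) • x - (1 - ‖x‖ ^ 2) • y ≠ 0 := by
  intro h0
  rcases hx.lt_or_eq with hlt | heq
  · have hinner := congrArg (fun z => ⟪x, z⟫) h0
    simp only [inner_sub_right, inner_smul_right, real_inner_self_eq_norm_sq, inner_zero_right]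
      at hinner
    have hxx : ⟪x, y⟫ = ‖x‖ ^ 2 := by linarith
    rw [hxx, ← smul_sub, smul_eq_zero] at h0
    rcases h0 with h0 | h0
    · nlinarith [norm_nonneg x]
    · exact hxy (sub_eq_zero.1 h0).symm
  · rw [heq, one_pow, sub_self, zero_smul, sub_zero, smul_eq_zero] at h0
    rcases h0 with h0 | rfl
    · linarith [inner_lt_one_of_ne heq hy hxy]
    · simp at heq

variable [FiniteDimensional ℝ E]

theorem det_fderiv_eq_zero_of_norm_eq_one {r : E → E} {r' : E →L[ℝ] E} {x : E}
    (hr : HasFDerivAt r r' x) (hnorm : ∀ᶠ y in 𝓝 x, ‖r y‖ = 1) : r'.det = 0 := by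
  by_contra hne
  obtain ⟨h, hh⟩ := (LinearMap.equivOfDetNeZero (r' : E →ₗ[ℝ] E) hne).surjective (r x)
  have hconst : HasFDerivAt (fun y => ‖r y‖ ^ 2) (0 : E →L[ℝ] ℝ) x :=
    (hasFDerivAt_const (1 : ℝ) x).congr_of_eventuallyEq (hnorm.mono fun y hy => by simp [hy])
  have hzero := congrArg (fun L : E →L[ℝ] ℝ => L h) (hr.norm_sq.unique hconst)
  replace hh : r' h = r x := hh
  simp [hh, hnorm.self_of_nhds] at hzero

theorem exists_polynomial_eval_eq_integral_det [MeasurableSpace E] [BorelSpace E] (μ : Measure E)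
    [IsFiniteMeasureOnCompacts μ] {g' : E → E →L[ℝ] E} (hg' : ContinuousOn g' (closedBall 0 1)) :
    ∃ Q : Polynomial ℝ, ∀ t,
      Q.eval t = ∫ x in ball (0 : E) 1, (ContinuousLinearMap.id ℝ E + t • g' x).det ∂μ := by
  choose p hp_deg hp using fun x =>
    exists_polynomial_eval_eq_det_one_add_smul (g' x : Module.End ℝ E)
  replace hp : ∀ t x, (p x).eval t = (ContinuousLinearMap.id ℝ E + t • g' x).det :=
    fun t x => hp x t
  simp_rw [← hp]
  refine exists_polynomial_eval_eq_integral hp_deg fun t => ?_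
  simp_rw [hp]
  have hcont : ContinuousOn (fun x => (ContinuousLinearMap.id ℝ E + t • g' x).det)
      (closedBall (0 : E) 1) := ContinuousLinearMap.continuous_det.comp_continuousOn
    (continuousOn_const.add (hg'.const_smul t))
  exact (hcont.integrableOn_compact (isCompact_closedBall 0 1)).mono_set ball_subset_closedBall

/-- The integral of `det (id + t • (r' - id))` over the ball is a polynomial in `t`. It equals the
volume of the ball for small `t`, and it vanishes at `t = 1` because `r` has constant norm. -/
theorem not_exists_contDiffOn_retraction_sphere {r : E → E} {U : Set E} (hU : IsOpen U)
    (hsub : closedBall 0 1 ⊆ U) (hr : ContDiffOn ℝ 1 r U)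
    (hnorm : ∀ x ∈ closedBall 0 1, ‖r x‖ = 1) (hsphere : ∀ x, ‖x‖ = 1 → r x = x) : False := by
  borelize E
  have hrU : ∀ x ∈ closedBall (0 : E) 1, ContDiffAt ℝ 1 r x := fun x hx =>
    hr.contDiffAt (hU.mem_nhds (hsub hx))
  let g' : E → E →L[ℝ] E := fun x => fderiv ℝ r x - ContinuousLinearMap.id ℝ E
  have hg : ∀ x ∈ closedBall (0 : E) 1, HasStrictFDerivAt (fun x => r x - x) (g' x) x := fun x hx =>
    ((hrU x hx).hasStrictFDerivAt one_ne_zero).sub (hasStrictFDerivAt_id x)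
  have hg' : ContinuousOn g' (closedBall 0 1) :=
    ((hr.continuousOn_fderiv_of_isOpen hU le_rfl).mono hsub).sub continuousOn_const
  obtain ⟨C, hC⟩ := (isCompact_closedBall (0 : E) 1).exists_bound_of_continuousOn hg'
  obtain ⟨Q, hQ⟩ := exists_polynomial_eval_eq_integral_det volume hg'
  have hsmall : ∀ t ∈ Ioo 0 (1 / (|C| + 1)), Q.eval t = volume.real (ball (0 : E) 1) := by
    rintro t ⟨ht0, ht⟩
    have hC0 := abs_nonneg C
    rw [lt_div_iff₀ (by positivity)] at ht
    rw [hQ]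
    exact integral_det_id_add_smul_eq_volume volume hg (fun x hx => (hC x hx).trans (le_abs_self C))
      (fun x hx => by simp [hsphere x hx]) (fun x hx => by simp [hnorm x hx]) ht0.le
      (by nlinarith) (by nlinarith)
  have hpos : 0 < 1 / (|C| + 1) := by positivity
  have hconst : Q = Polynomial.C (volume.real (ball (0 : E) 1)) :=
    Polynomial.eq_of_infinite_eval_eq _ _
      ((Ioo_infinite hpos).mono fun t ht => by simp [hsmall t ht])
  have hzero : Q.eval 1 = 0 := by
    rw [hQ]
    refine setIntegral_eq_zero_of_forall_eq_zero fun x hx => ?_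
    have hxc := ball_subset_closedBall hx
    rw [one_smul, add_sub_cancel]
    exact det_fderiv_eq_zero_of_norm_eq_one
      ((hrU x hxc).differentiableAt one_ne_zero).hasFDerivAt
      (Filter.mem_of_superset (isOpen_ball.mem_nhds hx)
        fun y hy => hnorm y (ball_subset_closedBall hy))
  rw [hconst, Polynomial.eval_C] at hzero
  exact (ENNReal.toReal_pos (measure_ball_pos _ _ one_pos).ne' measure_ball_lt_top.ne).ne' hzero

theorem exists_fixedPoint_closedBall_of_contDiff {p : E → E} (hp : ContDiff ℝ 1 p)
    (hmaps : ∀ x, ‖x‖ ≤ 1 → ‖p x‖ ≤ 1) : ∃ x, ‖x‖ ≤ 1 ∧ p x = x := by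
  by_contra! hfix
  let v : E → E := fun x => (1 - ⟪x, p x⟫) • x - (1 - ‖x‖ ^ 2) • p x
  have hv : ContDiff ℝ 1 v :=
    ((contDiff_const.sub (contDiff_id.inner ℝ hp)).smul contDiff_id).sub
      ((contDiff_const.sub (contDiff_norm_sq ℝ)).smul hp)
  have hv0 : ∀ x ∈ closedBall (0 : E) 1, v x ≠ 0 := fun x hx => by
    rw [mem_closedBall_zero_iff] at hx
    exact one_sub_inner_smul_sub_ne_zero hx (hmaps x hx) (hfix x hx)
  refine not_exists_contDiffOn_retraction_sphere (r := fun x => ‖v x‖⁻¹ • v x)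
    (U := {x | v x ≠ 0}) (isOpen_ne_fun hv.continuous continuous_const) hv0
    (fun x hx => (((hv.contDiffAt.norm ℝ hx).inv (norm_ne_zero_iff.2 hx)).smul
      hv.contDiffAt).contDiffWithinAt) (fun x hx => ?_) (fun x hx => ?_)
  · rw [norm_smul, norm_inv, norm_norm, inv_mul_cancel₀ (norm_ne_zero_iff.2 (hv0 x hx))]
  · have hpos : 0 < 1 - ⟪x, p x⟫ :=
      sub_pos.2 (inner_lt_one_of_ne hx (hmaps x hx.le) (hfix x hx.le))
    have hvx : v x = (1 - ⟪x, p x⟫) • x := by simp [v, hx]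
    simp only [hvx]
    rw [norm_smul, hx, mul_one, Real.norm_of_nonneg hpos.le, smul_smul, inv_mul_cancel₀ hpos.ne',
      one_smul]

theorem exists_fixedPoint_closedBall {h : E → E} (hh : Continuous h)
    (hmaps : ∀ x, ‖x‖ ≤ 1 → ‖h x‖ ≤ 1) : ∃ x, ‖x‖ ≤ 1 ∧ h x = x := by
  obtain ⟨x₀, hx₀, hmin⟩ := (isCompact_closedBall (0 : E) 1).exists_isMinOn ⟨0, by simp⟩
    (f := fun x => ‖x - h x‖) (by fun_prop)
  refine ⟨x₀, by simpa using hx₀, (sub_eq_zero.1 (norm_le_zero_iff.1 ?_)).symm⟩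
  refine le_of_forall_pos_le_add fun ε hε => ?_
  obtain ⟨p, hp, hpa, -⟩ := hh.exists_contDiff_approx 1 (ε := fun _ => ε / 2) continuous_const
    fun _ => by positivity
  replace hpa : ∀ x, ‖p x - h x‖ ≤ ε / 2 := fun x => by simpa [dist_eq_norm] using (hpa x).le
  have hpnorm : ∀ x, ‖x‖ ≤ 1 → ‖p x‖ ≤ 1 + ε / 2 := fun x hx => by
    calc ‖p x‖ = ‖h x + (p x - h x)‖ := by rw [add_sub_cancel]
      _ ≤ ‖h x‖ + ‖p x - h x‖ := norm_add_le _ _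
      _ ≤ 1 + ε / 2 := add_le_add (hmaps x hx) (hpa x)
  obtain ⟨x, hx, hfix⟩ := exists_fixedPoint_closedBall_of_contDiff (p := (1 + ε / 2)⁻¹ • p)
    (contDiff_const.smul (mod_cast hp)) fun x hx => by
      rw [Pi.smul_apply, norm_smul, norm_inv, Real.norm_of_nonneg (by positivity),
        inv_mul_le_iff₀ (by positivity), mul_one]
      exact hpnorm x hx
  have hpx : p x = (1 + ε / 2) • x := by
    rwa [Pi.smul_apply, inv_smul_eq_iff₀ (by positivity)] at hfix
  calc ‖x₀ - h x₀‖ ≤ ‖x - h x‖ := hmin (by simpa using hx)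
    _ = ‖(p x - h x) - (ε / 2) • x‖ := by rw [hpx]; congr 1; module
    _ ≤ ‖p x - h x‖ + ‖(ε / 2) • x‖ := norm_sub_le _ _
    _ ≤ ε / 2 + ε / 2 * 1 := by
      rw [norm_smul, Real.norm_of_nonneg (by positivity)]
      gcongr
      exact hpa x
    _ = 0 + ε := by ring

theorem addHaar_eq_zero_of_countable_lines {F : Type*} [NormedAddCommGroup F] [NormedSpace ℝ F]
    [FiniteDimensional ℝ F] [MeasurableSpace F] [BorelSpace F] (μ : Measure F)
    [μ.IsAddHaarMeasure] {Z : Set F} (hZ : IsClosed Z) {u : F}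
    (hu : ∀ y, {t : ℝ | y + t • u ∈ Z}.Countable) : μ Z = 0 := by
  let L : ℝ →L[ℝ] F := ContinuousLinearMap.smulRight (1 : ℝ →L[ℝ] ℝ) u
  have hae := ae_mem_of_ae_add_linearMap_mem L.toLinearMap volume μ (s := Zᶜ)
    hZ.measurableSet.compl fun y => by
      rw [ae_iff]
      simpa [L] using (hu y).measure_zero volume
  simpa [ae_iff] using hae

/-- Extend the inverse of `f` on `f '' closedBall 0 1` to the whole space and approximate it by a
smooth map `P`. As `P '' Z` is null, some small `c` avoids it, but a Brouwer fixed point of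
`x ↦ x - P (f x) + c` is a solution of `P (f x) = c`. -/
theorem exists_notMem_of_injective_of_measure_zero [MeasurableSpace E] [BorelSpace E]
    (μ : Measure E) [μ.IsAddHaarMeasure] {f : E → E} (hf : Continuous f)
    (hinj : Function.Injective f) {Z : Set E} (hnull : μ Z = 0) : ∃ x, f x ∉ Z := by
  by_contra! hfZ
  let K : Set E := closedBall 0 1
  have : CompactSpace K := isCompact_iff_compactSpace.1 (isCompact_closedBall _ _)
  have hemb : IsClosedEmbedding fun x : K => f x :=
    Continuous.isClosedEmbedding (by fun_prop) fun a b hab => Subtype.ext (hinj hab)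
  obtain ⟨G, hG⟩ :=
    ContinuousMap.exists_extension hemb (⟨fun x : K => (x : E), by fun_prop⟩ : C(K, E))
  replace hG : ∀ x ∈ K, G (f x) = x := fun x hx => congrArg (fun F : C(K, E) => F ⟨x, hx⟩) hG
  obtain ⟨P, hP, hPG, -⟩ := G.continuous.exists_contDiff_approx 1 (ε := fun _ => 1 / 2)
    continuous_const fun _ => by norm_num
  replace hP : ContDiff ℝ 1 P := mod_cast hP
  have hPZ : μ (P '' Z) = 0 := addHaar_image_eq_zero_of_differentiableOn_of_addHaar_eq_zero _
    (hP.differentiable one_ne_zero).differentiableOn hnull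
  obtain ⟨c, hc, hcZ⟩ : ∃ c ∈ ball (0 : E) (1 / 2), c ∉ P '' Z := by
    by_contra! hsub
    exact (measure_ball_pos μ 0 (by norm_num)).ne' (measure_mono_null hsub hPZ)
  obtain ⟨x, -, hfix⟩ := exists_fixedPoint_closedBall (h := fun x => x - P (f x) + c)
    (by have := hP.continuous; fun_prop) fun x hx => by
      have hdist := hPG (f x)
      rw [dist_eq_norm, hG x (by simpa [K] using hx), norm_sub_rev] at hdist
      rw [mem_ball_zero_iff] at hc
      calc ‖x - P (f x) + c‖ ≤ ‖x - P (f x)‖ + ‖c‖ := norm_add_le _ _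
        _ ≤ 1 := by linarith
  refine hcZ ⟨f x, hfZ x, ?_⟩
  rw [sub_add_eq_add_sub, sub_eq_iff_eq_add] at hfix
  exact (add_left_cancel hfix).symm

theorem exists_notMem_of_injective_of_countable_lines {V : Type*} [AddCommGroup V] [Module ℝ V]
    [TopologicalSpace V] [IsTopologicalAddGroup V] [ContinuousSMul ℝ V] [T2Space V]
    [FiniteDimensional ℝ V] {f : V → V} (hf : Continuous f) (hinj : Function.Injective f)
    {Z : Set V} (hZ : IsClosed Z) {u : V} (hu : ∀ y, {t : ℝ | y + t • u ∈ Z}.Countable) :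
    ∃ x, f x ∉ Z := by
  let e : V ≃L[ℝ] EuclideanSpace ℝ (Fin (Module.finrank ℝ V)) :=
    ContinuousLinearEquiv.ofFinrankEq (by simp)
  have hnull := addHaar_eq_zero_of_countable_lines volume (hZ.preimage e.symm.continuous)
    (u := e u) fun y => by simpa using hu (e.symm y)
  obtain ⟨y, hy⟩ := exists_notMem_of_injective_of_measure_zero volume
    (f := fun x => e (f (e.symm x))) (by fun_prop)
    (e.injective.comp (hinj.comp e.symm.injective)) hnull
  exact ⟨e.symm y, by simpa using hy⟩

end Brouwer

section PolynomialOnLines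

open Polynomial

variable {V : Type*} [AddCommGroup V] [Module ℂ V]

/-- `F` restricts to a polynomial function of one complex variable on every complex affine line. -/
def IsPolynomialOnLines (F : V → ℂ) : Prop :=
  ∀ x y, ∃ q : ℂ[X], ∀ z, F (x + z • y) = q.eval z

theorem IsPolynomialOnLines.exists_ne_zero {F : V → ℂ} (hF : IsPolynomialOnLines F) {x y : V}
    (h : F x ≠ 0 ∨ F y ≠ 0) :
    ∃ q : ℂ[X], q ≠ 0 ∧ ∀ z, F (x + z • (y - x)) = q.eval z := by
  obtain ⟨q, hq⟩ := hF x (y - x)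
  refine ⟨q, ?_, hq⟩
  rintro rfl
  have h₀ : F x = 0 := by simpa using hq 0
  have h₁ : F y = 0 := by simpa using hq 1
  exact h.elim (· h₀) (· h₁)

variable [TopologicalSpace V] [ContinuousAdd V] [ContinuousSMul ℂ V] {F : V → ℂ}

theorem IsPolynomialOnLines.isPreconnected_ne_zero (hF : IsPolynomialOnLines F)
    (s : Submodule ℂ V) : IsPreconnected {x | x ∈ s ∧ F x ≠ 0} := by
  refine isPreconnected_of_forall_pair fun x ⟨hx, hx₀⟩ y ⟨hy, hy₀⟩ => ?_
  obtain ⟨q, hq₀, hq⟩ := hF.exists_ne_zero (y := y) (.inl hx₀)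
  have hconn : IsConnected {z | q.IsRoot z}ᶜ :=
    ((finite_setOfPred_isRoot hq₀).countable.isPathConnected_compl_of_one_lt_rank
      (by simp [Complex.rank_real_complex])).isConnected
  refine ⟨(fun z : ℂ => x + z • (y - x)) '' {z | q.IsRoot z}ᶜ, ?_, ⟨0, ?_, by simp⟩,
    ⟨1, ?_, by simp⟩, hconn.isPreconnected.image _ (by fun_prop)⟩
  · rintro _ ⟨z, hz, rfl⟩
    exact ⟨s.add_mem hx (s.smul_mem _ (s.sub_mem hy hx)), (hq z).trans_ne hz⟩
  · simpa [← hq] using hx₀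
  · simpa [← hq] using hy₀

theorem IsPolynomialOnLines.subset_closure_ne_zero (hF : IsPolynomialOnLines F)
    {s : Submodule ℂ V} {y : V} (hy : y ∈ s) (hy₀ : F y ≠ 0) :
    (s : Set V) ⊆ closure {x | x ∈ s ∧ F x ≠ 0} := by
  intro x hx
  obtain ⟨q, hq₀, hq⟩ := hF.exists_ne_zero (x := x) (.inr hy₀)
  have hdense : Dense {z | q.IsRoot z}ᶜ := (finite_setOfPred_isRoot hq₀).countable.dense_compl ℂ
  have hmaps : Set.MapsTo (fun z : ℂ => x + z • (y - x)) {z | q.IsRoot z}ᶜ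
      {x | x ∈ s ∧ F x ≠ 0} := fun z hz =>
    ⟨s.add_mem hx (s.smul_mem _ (s.sub_mem hy hx)), (hq z).trans_ne hz⟩
  simpa using map_mem_closure (by fun_prop) (hdense 0) hmaps

end PolynomialOnLines

theorem eqOn_of_isPreconnected_of_eq_or_eq {X Y Z : Type*} [TopologicalSpace X]
    [TopologicalSpace Y] [T2Space Y] [TopologicalSpace Z] [T2Space Z] {s : Set X}
    (hs : IsPreconnected s) {f g : X → Y} {u v : X → Z} (hf : ContinuousOn f s)
    (hg : ContinuousOn g s) (hu : ContinuousOn u s) (hv : ContinuousOn v s)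
    (hor : ∀ x ∈ s, f x = g x ∨ u x = v x) (hnot : ∀ x ∈ s, f x = g x → u x ≠ v x)
    {x₀ : X} (hx₀ : x₀ ∈ s) (h₀ : f x₀ = g x₀) : Set.EqOn f g s := by
  rw [continuousOn_iff_continuous_domRestrict] at hf hg hu hv
  have := Subtype.preconnectedSpace hs
  have hcompl : {x : s | f x = g x}ᶜ = {x : s | u x = v x} :=
    Set.ext fun x => ⟨(hor x x.2).resolve_left, fun h h' => hnot x x.2 h' h⟩
  have hclopen : IsClopen {x : s | f x = g x} :=
    ⟨isClosed_eq hf hg, isClosed_compl_iff.1 (hcompl ▸ isClosed_eq hu hv)⟩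
  have huniv := hclopen.eq_univ ⟨⟨x₀, hx₀⟩, h₀⟩
  exact fun x hx => huniv.ge (Set.mem_univ (⟨x, hx⟩ : s))

section Discriminant

open Polynomial

theorem discr_eq_resultant_of_monic {R : Type*} [CommRing R] {f : R[X]} (hf : f.Monic)
    (hdeg : 0 < f.natDegree) :
    f.discr = (-1) ^ (f.natDegree * (f.natDegree - 1) / 2) *
      resultant f f.derivative f.natDegree (f.natDegree - 1) := by
  rw [resultant_deriv (natDegree_pos_iff_degree_pos.1 hdeg), hf.leadingCoeff, mul_one, ← mul_assoc,
    ← pow_add, Even.neg_one_pow ⟨_, rfl⟩, one_mul]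

theorem discr_map_of_monic {R S : Type*} [CommRing R] [CommRing S] [Nontrivial S] {f : R[X]}
    (hf : f.Monic) (φ : R →+* S) : (f.map φ).discr = φ f.discr := by
  rcases f.natDegree.eq_zero_or_pos with hdeg | hdeg
  · rw [hf.natDegree_eq_zero.1 hdeg, Polynomial.map_one, ← C_1, ← C_1, discr_C, discr_C, map_one]
  · rw [discr_eq_resultant_of_monic (hf.map φ) (by rwa [hf.natDegree_map]),
      discr_eq_resultant_of_monic hf hdeg, hf.natDegree_map, derivative_map, resultant_map_map]
    simp

theorem discr_ne_zero_iff_separable {K : Type*} [Field K] [CharZero K] {f : K[X]} (hf : f.Monic) :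
    f.discr ≠ 0 ↔ f.Separable := by
  rcases f.natDegree.eq_zero_or_pos with hdeg | hdeg
  · rw [hf.natDegree_eq_zero.1 hdeg]
    simp [← C_1, discr_C, -map_one, separable_C]
  · rw [discr_eq_resultant_of_monic hf hdeg, ← natDegree_derivative, Polynomial.Separable,
      ← isUnit_resultant_iff_isCoprime hf, isUnit_iff_ne_zero]
    simp

variable {ι : Type*} [Fintype ι] [DecidableEq ι]

theorem matrix_discr_map {R S : Type*} [CommRing R] [CommRing S] [Nontrivial S]
    (M : Matrix ι ι R) (φ : R →+* S) : (M.map φ).discr = φ M.discr := by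
  rw [Matrix.discr, Matrix.discr, charpoly_map, discr_map_of_monic M.charpoly_monic]

theorem continuous_matrix_discr : Continuous fun X : Matrix ι ι ℂ => X.discr := by
  have h : (fun X : Matrix ι ι ℂ => X.discr) = fun X =>
      MvPolynomial.eval (fun p : ι × ι => X p.1 p.2) (mvPolynomialX ι ι ℂ).discr := by
    funext X
    rw [← matrix_discr_map]
    exact congrArg Matrix.discr (mvPolynomialX_map_eval₂ (RingHom.id ℂ) X).symm
  rw [h]
  exact (MvPolynomial.continuous_eval _).comp (by fun_prop)

theorem isPolynomialOnLines_discr : IsPolynomialOnLines fun X : Matrix ι ι ℂ => X.discr := by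
  refine fun X Y => ⟨(X.map C + (Polynomial.X : ℂ[X]) • Y.map C).discr, fun z => ?_⟩
  rw [← coe_evalRingHom, ← matrix_discr_map]
  congr 1
  ext i j
  simp only [smul_eq_mul, Matrix.add_apply, Matrix.smul_apply, map_apply, coe_evalRingHom,
    eval_add, eval_mul, eval_C, eval_X]

theorem discr_ne_zero_iff_card_spectrum {K : Type*} [Field K] [IsAlgClosed K] [CharZero K]
    (X : Matrix ι ι K) : X.discr ≠ 0 ↔ (spectrum K X).ncard = Fintype.card ι := by
  classical
  have hspec : spectrum K X = X.charpoly.rootSet K :=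
    Set.ext fun μ => by
      simp [mem_spectrum_iff_isRoot_charpoly, mem_rootSet, X.charpoly_monic.ne_zero]
  rw [Matrix.discr, discr_ne_zero_iff_separable X.charpoly_monic, hspec,
    ← card_rootSet_eq_natDegree_iff_of_splits (K := K) X.charpoly_monic.ne_zero
      (IsAlgClosed.splits _), charpoly_natDegree_eq_dim, Set.ncard_eq_toFinset_card',
    Set.toFinset_card]

theorem discr_smul_ne_zero_iff {K : Type*} [Field K] [IsAlgClosed K] [CharZero K] {w : K}
    (hw : w ≠ 0) (X : Matrix ι ι K) :
    (w • X).discr ≠ 0 ↔ X.discr ≠ 0 := by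
  rw [discr_ne_zero_iff_card_spectrum, discr_ne_zero_iff_card_spectrum]
  have h := spectrum.unit_smul_eq_smul X (Units.mk0 w hw)
  rw [Units.smul_mk0] at h
  rw [h, Set.ncard_smul_set]

theorem discr_diagonal_ne_zero_iff {K : Type*} [Field K] [CharZero K] (d : ι → K) :
    (diagonal d).discr ≠ 0 ↔ Function.Injective d := by
  rw [Matrix.discr, discr_ne_zero_iff_separable (charpoly_monic _), charpoly_diagonal,
    separable_prod_X_sub_C_iff]

/-- Dividing by the parameter moves the question to a neighbourhood of `D`. -/
theorem finite_discr_line_eq_zero (X : Matrix ι ι ℂ) {D : Matrix ι ι ℂ} (hD : D.discr ≠ 0) :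
    {z : ℂ | (X + z • D).discr = 0}.Finite := by
  obtain ⟨q, hq⟩ := isPolynomialOnLines_discr X D
  simp only [hq]
  refine finite_setOfPred_isRoot ?_
  rintro rfl
  have hzero : Set.EqOn (fun w : ℂ => (D + w • X).discr) 0 {0}ᶜ := fun w (hw : w ≠ 0) => by
    have hsmul : D + w • X = w • (X + w⁻¹ • D) := by
      rw [smul_add, smul_inv_smul₀ hw, add_comm]
    by_contra hne
    refine (discr_smul_ne_zero_iff hw (X + w⁻¹ • D)).1 ?_ (by simpa using hq w⁻¹)
    rwa [← hsmul]
  have hcont : Continuous fun w : ℂ => (D + w • X).discr :=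
    continuous_matrix_discr.comp (by fun_prop)
  have h₀ := congrFun (hcont.ext_on (dense_compl_singleton 0) continuous_zero hzero) 0
  exact hD (by simpa using h₀)

end Discriminant

section CharpolyPreservation

open Polynomial

variable {ι : Type*} [Fintype ι] [DecidableEq ι]

theorem charpoly_eq_of_spectrum_subset {K : Type*} [Field K] [IsAlgClosed K] [CharZero K]
    {X Y : Matrix ι ι K} (hY : Y.discr ≠ 0) (h : spectrum K Y ⊆ spectrum K X) :
    Y.charpoly = X.charpoly := by
  have hsep := (discr_ne_zero_iff_separable Y.charpoly_monic).1 hY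
  have hsplit (Z : Matrix ι ι K) : Z.charpoly.Splits := IsAlgClosed.splits _
  have hle : Y.charpoly.roots ≤ X.charpoly.roots := by
    refine (Multiset.le_iff_subset (nodup_roots hsep)).2 fun μ hμ => ?_
    rw [mem_roots (charpoly_monic _).ne_zero, ← mem_spectrum_iff_isRoot_charpoly] at hμ ⊢
    exact h hμ
  have hroots : Y.charpoly.roots = X.charpoly.roots := by
    refine Multiset.eq_of_le_of_card_le hle ?_
    rw [← (hsplit X).natDegree_eq_card_roots, ← (hsplit Y).natDegree_eq_card_roots,
      charpoly_natDegree_eq_dim, charpoly_natDegree_eq_dim]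
  rw [(hsplit X).eq_prod_roots_of_monic X.charpoly_monic,
    (hsplit Y).eq_prod_roots_of_monic Y.charpoly_monic, hroots]

theorem continuous_eval_charpoly :
    Continuous fun (X : Matrix ι ι ℂ) (μ : ℂ) => X.charpoly.eval μ := by
  simp only [eval_charpoly]
  fun_prop

theorem eval_charpoly_eq_iff {X Y : Matrix ι ι ℂ} :
    (fun μ : ℂ => X.charpoly.eval μ) = (fun μ => Y.charpoly.eval μ) ↔ X.charpoly = Y.charpoly :=
  ⟨fun h => Polynomial.funext (congrFun h), fun h => by rw [h]⟩

variable {s : Submodule ℂ (Matrix ι ι ℂ)} {φ : Matrix ι ι ℂ → Matrix ι ι ℂ}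

theorem exists_discr_apply_ne_zero (hD : ∃ D ∈ s, D.discr ≠ 0) (hmaps : Set.MapsTo φ s s)
    (hcont : ContinuousOn φ s) (hinj : Set.InjOn φ s) : ∃ X ∈ s, (φ X).discr ≠ 0 := by
  obtain ⟨D, hDs, hD⟩ := hD
  have : ContinuousSMul ℝ s := inferInstanceAs (ContinuousSMul ℝ (s.restrictScalars ℝ))
  have : FiniteDimensional ℝ s := Module.Finite.trans ℂ _
  obtain ⟨X, hX⟩ := exists_notMem_of_injective_of_countable_lines (V := s)
    (hcont.mapsToRestrict hmaps) (hmaps.restrict_inj.2 hinj)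
    (Z := {X : s | (X : Matrix ι ι ℂ).discr = 0})
    (isClosed_eq (continuous_matrix_discr.comp continuous_subtype_val) continuous_const)
    (u := ⟨D, hDs⟩) fun Y =>
      ((finite_discr_line_eq_zero (Y : Matrix ι ι ℂ) hD).preimage
        Complex.ofReal_injective.injOn).countable
  exact ⟨X, X.2, hX⟩

theorem charpoly_apply_eq_of_spectrum_subset (hD : ∃ D ∈ s, D.discr ≠ 0)
    (hmaps : Set.MapsTo φ s s) (hcont : ContinuousOn φ s) (hinj : Set.InjOn φ s)
    (hspec : ∀ X ∈ s, spectrum ℂ (φ X) ⊆ spectrum ℂ X) :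
    ∀ X ∈ s, (φ X).charpoly = X.charpoly := by
  obtain ⟨X₀, hX₀, hφX₀⟩ := exists_discr_apply_ne_zero hD hmaps hcont hinj
  obtain ⟨D, hDs, hD⟩ := hD
  have heq : ∀ X ∈ s, (φ X).discr ≠ 0 → (φ X).charpoly = X.charpoly := fun X hX h =>
    charpoly_eq_of_spectrum_subset h (hspec X hX)
  set U := {X | X ∈ s ∧ X.discr ≠ 0}
  have hUs : U ⊆ s := fun X hX => hX.1
  have hcontφ : ContinuousOn (fun X (μ : ℂ) => (φ X).charpoly.eval μ) s :=
    continuous_eval_charpoly.comp_continuousOn hcont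
  have hU : Set.EqOn (fun X (μ : ℂ) => (φ X).charpoly.eval μ)
      (fun X μ => X.charpoly.eval μ) U := by
    refine eqOn_of_isPreconnected_of_eq_or_eq (x₀ := X₀) (u := fun X => (φ X).discr) (v := 0)
      (isPolynomialOnLines_discr.isPreconnected_ne_zero s) (hcontφ.mono hUs)
      continuous_eval_charpoly.continuousOn (continuous_matrix_discr.comp_continuousOn
      (hcont.mono hUs)) continuousOn_const (fun X hX => ?_) (fun X hX h => ?_) ⟨hX₀, ?_⟩
      (eval_charpoly_eq_iff.2 (heq X₀ hX₀ hφX₀))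
    · rw [or_iff_not_imp_right]
      exact fun h => eval_charpoly_eq_iff.2 (heq X hX.1 h)
    · have hX₁ := hX.2
      rw [Matrix.discr, ← eval_charpoly_eq_iff.1 h] at hX₁
      exact hX₁
    · rwa [Matrix.discr, ← heq X₀ hX₀ hφX₀]
  exact fun X hX => eval_charpoly_eq_iff.1 <| hU.of_subset_closure hcontφ
    continuous_eval_charpoly.continuousOn hUs
    (isPolynomialOnLines_discr.subset_closure_ne_zero hDs hD) hX

end CharpolyPreservation

section Conjugation

variable {ι : Type*} [Fintype ι] [DecidableEq ι]

theorem continuous_conjAct_smul (T : ConjAct (Matrix ι ι ℂ)ˣ) :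
    Continuous fun X : Matrix ι ι ℂ => T • X := by
  simp only [ConjAct.units_smul_def]
  fun_prop

theorem charpoly_conjAct_smul {R : Type*} [CommRing R] (T : ConjAct (Matrix ι ι R)ˣ)
    (X : Matrix ι ι R) :
    (T • X).charpoly = X.charpoly := by
  rw [ConjAct.units_smul_def, coe_units_inv, charpoly_units_conj]

theorem commute_conjAct_smul_iff {R : Type*} [Semiring R] (T : ConjAct (Matrix ι ι R)ˣ)
    {X Y : Matrix ι ι R} :
    Commute (T • X) (T • Y) ↔ Commute X Y := by
  simp only [Commute, SemiconjBy, ← smul_mul', smul_left_cancel_iff]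

/-- The columns of the conjugating matrix are eigenvectors for the distinct eigenvalues `d i`. -/
theorem exists_eq_conjAct_smul_diagonal {K : Type*} [Field K] {X : Matrix ι ι K} {d : ι → K}
    (hd : Function.Injective d) (hX : X.charpoly = (diagonal d).charpoly) :
    ∃ T : ConjAct (Matrix ι ι K)ˣ, X = T • diagonal d := by
  have hker (i : ι) : ∃ v, v ≠ 0 ∧ (scalar ι (d i) - X) *ᵥ v = 0 := by
    rw [exists_mulVec_eq_zero_iff, ← eval_charpoly, hX, charpoly_diagonal, Polynomial.eval_prod]
    exact Finset.prod_eq_zero (Finset.mem_univ i) (by simp)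
  choose v hv₀ hv using hker
  have hXv (i : ι) : X *ᵥ v i = d i • v i := by
    simpa [sub_mulVec, sub_eq_zero, eq_comm] using hv i
  have hli : LinearIndependent K v :=
    Module.End.eigenvectors_linearIndependent' (toLin' X) d hd v fun i =>
      Module.End.hasEigenvector_iff.2
        ⟨Module.End.mem_eigenspace_iff.2 (by simpa using hXv i), hv₀ i⟩
  have hunit : IsUnit (of v)ᵀ := linearIndependent_cols_iff_isUnit.1 hli
  refine ⟨ConjAct.toConjAct hunit.unit, ?_⟩
  rw [ConjAct.units_smul_def, Units.eq_mul_inv_iff_mul_eq]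
  ext a i
  simpa [mulVec, mul_apply, dotProduct, diagonal_apply, mul_comm] using congrFun (hXv i) a

end Conjugation

section Frames

variable {ι : Type*} [Fintype ι] [DecidableEq ι]

theorem eq_diagonal_of_commute_diagonal {R : Type*} [CommRing R] [IsDomain R] {X : Matrix ι ι R}
    {d : ι → R}
    (hd : Function.Injective d) (h : Commute X (diagonal d)) : X = diagonal X.diag := by
  ext i j
  rcases eq_or_ne i j with rfl | hij
  · simp
  · have hX := congrFun₂ h.eq i j
    rw [mul_diagonal, diagonal_mul, mul_comm, ← sub_eq_zero, ← sub_mul, mul_eq_zero] at hX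
    rw [diagonal_apply_ne _ hij, hX.resolve_left (sub_ne_zero.2 (hd.ne hij.symm))]

theorem exists_injective_complex (ι : Type*) [Finite ι] : ∃ d : ι → ℂ, Function.Injective d := by
  obtain ⟨k, ⟨e⟩⟩ := Finite.exists_equiv_fin ι
  exact ⟨fun i => (e i : ℕ), Nat.cast_injective.comp (Fin.val_injective.comp e.injective)⟩

theorem exists_eq_of_charpoly_diagonal_eq {R : Type*} [CommRing R] [IsDomain R] {d d' : ι → R}
    (h : (diagonal d).charpoly = (diagonal d').charpoly) (i : ι) : ∃ j, d i = d' j := by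
  have h₀ := congrArg (Polynomial.eval (d i)) h
  simp only [charpoly_diagonal, Polynomial.eval_prod, Polynomial.eval_sub, Polynomial.eval_X,
    Polynomial.eval_C] at h₀
  rw [Finset.prod_eq_zero (Finset.mem_univ i) (sub_self _), eq_comm, Finset.prod_eq_zero_iff] at h₀
  obtain ⟨j, -, hj⟩ := h₀
  exact ⟨j, sub_eq_zero.1 hj⟩

theorem isPolynomialOnLines_discr_diagonal :
    IsPolynomialOnLines fun d : ι → ℂ => (diagonal d).discr := by
  intro x y
  obtain ⟨q, hq⟩ := isPolynomialOnLines_discr (diagonal x) (diagonal y)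
  refine ⟨q, fun z => ?_⟩
  rw [← hq, ← diagonal_smul, diagonal_add]
  rfl

/-- A continuous selection of roots: it cannot jump between the distinct entries of `d`. -/
theorem eq_id_of_charpoly_diagonal_eq {h : (ι → ℂ) → ι → ℂ} (hcont : Continuous h)
    (hchar : ∀ d, (diagonal (h d)).charpoly = (diagonal d).charpoly) {d₀ : ι → ℂ}
    (hd₀ : Function.Injective d₀) (h₀ : h d₀ = d₀) : h = id := by
  set U := {d : ι → ℂ | d ∈ (⊤ : Submodule ℂ (ι → ℂ)) ∧ (diagonal d).discr ≠ 0}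
  have hinj {d : ι → ℂ} (hd : d ∈ U) : Function.Injective d :=
    (discr_diagonal_ne_zero_iff d).1 hd.2
  have hd₀U : d₀ ∈ U := ⟨trivial, (discr_diagonal_ne_zero_iff d₀).2 hd₀⟩
  have hU : Set.EqOn h id U := fun d hd => funext fun i => by
    refine eqOn_of_isPreconnected_of_eq_or_eq (f := fun d => h d i) (g := fun d => d i)
      (u := fun d => ∏ j ∈ Finset.univ.erase i, (h d i - d j)) (v := 0) (x₀ := d₀)
      (isPolynomialOnLines_discr_diagonal.isPreconnected_ne_zero ⊤)
      (by fun_prop) (by fun_prop) (by fun_prop) continuousOn_const (fun d _ => ?_)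
      (fun d hd hi => ?_) hd₀U (congrFun h₀ i) hd
    · obtain ⟨j, hj⟩ := exists_eq_of_charpoly_diagonal_eq (hchar d) i
      rcases eq_or_ne j i with rfl | hji
      · exact .inl hj
      · exact .inr (Finset.prod_eq_zero (Finset.mem_erase.2 ⟨hji, Finset.mem_univ j⟩)
          (sub_eq_zero.2 hj))
    · refine Finset.prod_ne_zero_iff.2 fun j hj => ?_
      rw [hi]
      exact sub_ne_zero.2 ((hinj hd).ne (Finset.ne_of_mem_erase hj).symm)
  have hdense : Dense U := dense_iff_closure_eq.2 (Set.univ_subset_iff.1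
    (isPolynomialOnLines_discr_diagonal.subset_closure_ne_zero (s := ⊤) trivial hd₀U.2))
  exact hcont.ext_on hdense continuous_id hU

theorem exists_frame {f : (ι → ℂ) → Matrix ι ι ℂ} (hcont : Continuous f)
    (hcomm : ∀ d d', Commute (f d) (f d'))
    (hchar : ∀ d, (f d).charpoly = (diagonal d).charpoly) :
    ∃ T : ConjAct (Matrix ι ι ℂ)ˣ, ∀ d, f d = T • diagonal d := by
  obtain ⟨d₀, hd₀⟩ := exists_injective_complex ι
  obtain ⟨T, hT⟩ := exists_eq_conjAct_smul_diagonal hd₀ (hchar d₀)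
  have hdiag (d : ι → ℂ) : T⁻¹ • f d = diagonal (T⁻¹ • f d).diag := by
    refine eq_diagonal_of_commute_diagonal hd₀ ?_
    rw [← commute_conjAct_smul_iff T, smul_inv_smul, ← hT]
    exact hcomm d d₀
  have hid : (fun d => (T⁻¹ • f d).diag) = id := by
    refine eq_id_of_charpoly_diagonal_eq ?_ (fun d => ?_) hd₀ ?_
    · exact ((continuous_conjAct_smul T⁻¹).comp hcont).matrix_diag
    · rw [← hdiag, charpoly_conjAct_smul, hchar]
    · rw [hT, inv_smul_smul, diag_diagonal]
  refine ⟨T, fun d => ?_⟩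
  rw [← inv_smul_eq_iff, hdiag]
  exact congrArg diagonal (congrFun hid d)

end Frames

section CharpolyPreserver

variable {ι α : Type*} [Fintype ι] [DecidableEq ι] [LinearOrder α]

/-- What remains of the hypotheses of the theorem once `φ` is known to preserve characteristic
polynomials. The values of `φ` are not required to be block triangular, which makes the notion
stable under conjugation and transposition of the values. -/
structure IsCharpolyPreserver (b : ι → α) (φ : Matrix ι ι ℂ → Matrix ι ι ℂ) : Prop where
  continuousOn : ContinuousOn φ {X | X.BlockTriangular b}
  injOn : Set.InjOn φ {X | X.BlockTriangular b}
  commute {X Y : Matrix ι ι ℂ} : X.BlockTriangular b → Y.BlockTriangular b → Commute X Y →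
    Commute (φ X) (φ Y)
  charpoly_eq {X : Matrix ι ι ℂ} : X.BlockTriangular b → (φ X).charpoly = X.charpoly

namespace IsCharpolyPreserver

variable {b : ι → α} {φ : Matrix ι ι ℂ → Matrix ι ι ℂ} {S : ConjAct (Matrix ι ι ℂ)ˣ}

theorem conj (h : IsCharpolyPreserver b φ)
    (hS : ∀ X : Matrix ι ι ℂ, X.BlockTriangular b → (S • X).BlockTriangular b)
    (T : ConjAct (Matrix ι ι ℂ)ˣ) : IsCharpolyPreserver b fun X => T • φ (S • X) where
  continuousOn := (continuous_conjAct_smul T).comp_continuousOn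
    (h.continuousOn.comp (continuous_conjAct_smul S).continuousOn hS)
  injOn X hX Y hY hXY :=
    smul_left_cancel S (h.injOn (hS X hX) (hS Y hY) (smul_left_cancel T hXY))
  commute hX hY hXY := (commute_conjAct_smul_iff T).2
    (h.commute (hS _ hX) (hS _ hY) ((commute_conjAct_smul_iff S).2 hXY))
  charpoly_eq hX := by
    rw [charpoly_conjAct_smul, h.charpoly_eq (hS _ hX), charpoly_conjAct_smul]

protected theorem smul (h : IsCharpolyPreserver b φ) (T : ConjAct (Matrix ι ι ℂ)ˣ) :
    IsCharpolyPreserver b fun X => T • φ X := by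
  simpa only [one_smul] using h.conj (S := 1) (fun X hX => by rwa [one_smul]) T

theorem transpose (h : IsCharpolyPreserver b φ) : IsCharpolyPreserver b fun X => (φ X)ᵀ where
  continuousOn := continuous_id.matrix_transpose.comp_continuousOn h.continuousOn
  injOn X hX Y hY hXY := h.injOn hX hY (transpose_injective hXY)
  commute hX hY hXY := by
    simpa only [Commute, SemiconjBy, ← transpose_mul, transpose_inj, eq_comm]
      using h.commute hX hY hXY
  charpoly_eq hX := by rw [charpoly_transpose, h.charpoly_eq hX]

theorem exists_frame (h : IsCharpolyPreserver b φ)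
    (hS : ∀ d, (S • diagonal d : Matrix ι ι ℂ).BlockTriangular b) :
    ∃ T : ConjAct (Matrix ι ι ℂ)ˣ, ∀ d, φ (S • diagonal d) = T • diagonal d := by
  refine _root_.exists_frame (h.continuousOn.comp_continuous ?_ hS) (fun d d' => ?_) fun d => ?_
  · exact (continuous_conjAct_smul S).comp continuous_id.matrix_diagonal
  · exact h.commute (hS d) (hS d') ((commute_conjAct_smul_iff S).2 (commute_diagonal d d'))
  · rw [h.charpoly_eq (hS d), charpoly_conjAct_smul]

end IsCharpolyPreserver

end CharpolyPreserver

section RankOneIdempotents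

variable {ι K : Type*} [Fintype ι] [Field K]

/-- Rank-one idempotents, in the form `x yᵗ` with `yᵗ x = 1`. -/
def IsRankOneIdempotent (P : Matrix ι ι K) : Prop :=
  ∃ x y, y ⬝ᵥ x = 1 ∧ P = vecMulVec x y

/-- Orthogonality of idempotents: both products vanish. -/
def MulOrthogonal (P Q : Matrix ι ι K) : Prop :=
  P * Q = 0 ∧ Q * P = 0

theorem mulOrthogonal_vecMulVec_iff {x y z w : ι → K} (hxy : y ⬝ᵥ x = 1) (hzw : w ⬝ᵥ z = 1) :
    MulOrthogonal (vecMulVec x y) (vecMulVec z w) ↔ y ⬝ᵥ z = 0 ∧ w ⬝ᵥ x = 0 := by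
  have hne {u v : ι → K} (h : u ⬝ᵥ v = 1) : u ≠ 0 ∧ v ≠ 0 := by
    constructor <;> rintro rfl <;> simp at h
  simp [MulOrthogonal, vecMulVec_mul_vecMulVec, hne hxy, hne hzw]

theorem MulOrthogonal.transpose {P Q : Matrix ι ι K} (h : MulOrthogonal P Q) :
    MulOrthogonal Pᵀ Qᵀ := by
  simp only [MulOrthogonal, ← transpose_mul, h.1, h.2, transpose_zero, and_self]

namespace IsRankOneIdempotent

variable {P Q : Matrix ι ι K}

theorem ne_zero (hP : IsRankOneIdempotent P) : P ≠ 0 := by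
  obtain ⟨x, y, hxy, rfl⟩ := hP
  refine vecMulVec_ne_zero ?_ ?_ <;> rintro rfl <;> simp at hxy

theorem mul_self (hP : IsRankOneIdempotent P) : P * P = P := by
  obtain ⟨x, y, hxy, rfl⟩ := hP
  rw [vecMulVec_mul_vecMulVec, hxy, one_smul]

theorem ne_of_mulOrthogonal (hP : IsRankOneIdempotent P) (hPQ : MulOrthogonal P Q) : P ≠ Q := by
  rintro rfl
  exact hP.ne_zero (hP.mul_self ▸ hPQ.1)

protected theorem transpose (hP : IsRankOneIdempotent P) : IsRankOneIdempotent Pᵀ := by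
  obtain ⟨x, y, hxy, rfl⟩ := hP
  exact ⟨y, x, by rwa [dotProduct_comm], transpose_vecMulVec _ _⟩

theorem mulOrthogonal_of_commute (hP : IsRankOneIdempotent P) (hQ : IsRankOneIdempotent Q)
    (hPQ : Commute P Q) (hne : P ≠ Q) : MulOrthogonal P Q := by
  obtain ⟨c, hP', hQ'⟩ : ∃ c : K, P * Q * P = c • P ∧ Q * P * Q = c • Q := by
    obtain ⟨x, y, -, rfl⟩ := hP
    obtain ⟨z, w, -, rfl⟩ := hQ
    refine ⟨(y ⬝ᵥ z) * (w ⬝ᵥ x), ?_, ?_⟩ <;>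
      simp only [vecMulVec_mul_vecMulVec, vecMulVec_smul, smul_mul, smul_smul, mul_comm]
  have hP'' : P * Q = c • P := by rw [← hP', mul_assoc, ← hPQ.eq, ← mul_assoc, hP.mul_self]
  have hQ'' : P * Q = c • Q := by rw [← hQ', mul_assoc, hPQ.eq, ← mul_assoc, hQ.mul_self]
  have hc : c • (P - Q) = 0 := by rw [smul_sub, ← hP'', ← hQ'', sub_self]
  have hPQ₀ : P * Q = 0 := by
    rw [hP'', (smul_eq_zero.1 hc).resolve_right (sub_ne_zero.2 hne), zero_smul]
  exact ⟨hPQ₀, hPQ.eq ▸ hPQ₀⟩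

variable [DecidableEq ι]

theorem conj (hP : IsRankOneIdempotent P) (T : ConjAct (Matrix ι ι K)ˣ) :
    IsRankOneIdempotent (T • P) := by
  obtain ⟨x, y, hxy, rfl⟩ := hP
  refine ⟨(ConjAct.ofConjAct T).1 *ᵥ x, y ᵥ* (ConjAct.ofConjAct T)⁻¹.1, ?_, ?_⟩
  · rw [← dotProduct_mulVec, mulVec_mulVec, Units.inv_mul, one_mulVec, hxy]
  · rw [ConjAct.units_smul_def, mul_vecMulVec, vecMulVec_mul]

protected theorem single (k : ι) : IsRankOneIdempotent (single k k (1 : K)) :=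
  ⟨Pi.single k 1, Pi.single k 1, by simp, single_eq_single_vecMulVec_single k k⟩

end IsRankOneIdempotent

end RankOneIdempotents

section Shears

variable {ι K α : Type*} [Field K] [LinearOrder α] {b : ι → α}

theorem blockTriangular_vecMulVec_iff {x y : ι → K} :
    (vecMulVec x y).BlockTriangular b ↔ ∀ i j, x i ≠ 0 → y j ≠ 0 → b i ≤ b j := by
  simp only [BlockTriangular, vecMulVec_apply, mul_eq_zero]
  exact forall₂_congr fun i j => by rw [← not_lt]; tauto

variable [Fintype ι] [DecidableEq ι]

/-- Conjugation by the transvection `1 + u vᵗ`, where `vᵗ u = 0`. -/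
def shear (u v : ι → K) (h : v ⬝ᵥ u = 0) : ConjAct (Matrix ι ι K)ˣ :=
  ConjAct.toConjAct
    { val := 1 + vecMulVec u v
      inv := 1 - vecMulVec u v
      val_inv := by simp [add_mul, mul_sub, vecMulVec_mul_vecMulVec, h]
      inv_val := by simp [sub_mul, mul_add, vecMulVec_mul_vecMulVec, h] }

theorem shear_smul {u v : ι → K} (h : v ⬝ᵥ u = 0) (X : Matrix ι ι K) :
    shear u v h • X = (1 + vecMulVec u v) * X * (1 - vecMulVec u v) :=
  rfl

theorem shear_smul_vecMulVec {u v : ι → K} (h : v ⬝ᵥ u = 0) (x y : ι → K) :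
    shear u v h • vecMulVec x y = vecMulVec (x + (v ⬝ᵥ x) • u) (y - (y ⬝ᵥ u) • v) := by
  rw [shear_smul, mul_vecMulVec, vecMulVec_mul, add_mulVec, vecMul_sub, one_mulVec, vecMul_one,
    vecMulVec_mulVec, vecMul_vecMulVec, op_smul_eq_smul]

theorem blockTriangular_shear_smul {u v : ι → K} {h : v ⬝ᵥ u = 0}
    (huv : (vecMulVec u v).BlockTriangular b) (X : Matrix ι ι K) (hX : X.BlockTriangular b) :
    (shear u v h • X).BlockTriangular b :=
  ((blockTriangular_one.add huv).mul hX).mul (blockTriangular_one.sub huv)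

/-- Scaling `P = x yᵗ` so that `x i = 1`, the shear is by `x - eᵢ`. -/
theorem IsRankOneIdempotent.exists_eq_shear_smul_vecMulVec_single {P : Matrix ι ι K}
    (hP : IsRankOneIdempotent P) (hPb : P.BlockTriangular b) :
    ∃ (i : ι) (u y : ι → K) (h : Pi.single i 1 ⬝ᵥ u = 0),
      (vecMulVec u (Pi.single i 1)).BlockTriangular b ∧ y i = 1 ∧
      (vecMulVec (Pi.single i 1) y).BlockTriangular b ∧
      P = shear u (Pi.single i 1) h • vecMulVec (Pi.single i 1) y := by
  obtain ⟨x, y, hxy, rfl⟩ := hP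
  obtain ⟨i, -, hi⟩ : ∃ i ∈ Finset.univ, y i * x i ≠ 0 :=
    Finset.exists_ne_zero_of_sum_ne_zero (hxy.trans_ne one_ne_zero)
  have hyi : y i ≠ 0 := left_ne_zero_of_mul hi
  have hxi : x i ≠ 0 := right_ne_zero_of_mul hi
  rw [blockTriangular_vecMulVec_iff] at hPb
  set u := (x i)⁻¹ • x - Pi.single i 1
  set c := x i • y ⬝ᵥ u
  have hu : Pi.single i 1 ⬝ᵥ u = 0 := by simp [u, hxi]
  have hc : c = 1 - x i * y i := by simp [c, u, hxy, hxi, dotProduct_sub]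
  refine ⟨i, u, x i • y + c • Pi.single i 1, hu, ?_, by simp [hc], ?_, ?_⟩
  · refine blockTriangular_vecMulVec_iff.2 fun k j hk hj => ?_
    obtain rfl : j = i := by by_contra hji; simp [hji] at hj
    obtain rfl | hkj := eq_or_ne k j
    · exact le_rfl
    · exact hPb k j (by rintro h; simp [u, h, hkj] at hk) hyi
  · refine blockTriangular_vecMulVec_iff.2 fun k j hk hj => ?_
    obtain rfl : k = i := by by_contra hki; simp [hki] at hk
    obtain rfl | hjk := eq_or_ne j k
    · exact le_rfl
    · exact hPb k j hxi (by rintro h; simp [h, hjk] at hj)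
  · rw [shear_smul_vecMulVec, add_dotProduct, smul_dotProduct _ (Pi.single i 1) u, hu]
    simp [u, c, vecMulVec_smul, smul_smul, hxi]

theorem vecMulVec_single_eq_shear_smul_single {i : ι} {y : ι → K}
    (hy : (Pi.single i 1 - y) ⬝ᵥ Pi.single i 1 = 0) :
    vecMulVec (Pi.single i 1) y = shear (Pi.single i 1) (Pi.single i 1 - y) hy • single i i 1 := by
  rw [single_eq_single_vecMulVec_single, shear_smul_vecMulVec, hy]
  simp

theorem IsRankOneIdempotent.exists_eq_smul_single {P : Matrix ι ι K}
    (hP : IsRankOneIdempotent P) (hPb : P.BlockTriangular b) :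
    ∃ (i : ι) (S : ConjAct (Matrix ι ι K)ˣ),
      (∀ X : Matrix ι ι K, X.BlockTriangular b → (S • X).BlockTriangular b) ∧
      P = S • single i i 1 := by
  obtain ⟨i, u, y, hu, hub, hyi, hyb, rfl⟩ := hP.exists_eq_shear_smul_vecMulVec_single hPb
  have hy : (Pi.single i 1 - y) ⬝ᵥ Pi.single i 1 = 0 := by simp [hyi]
  refine ⟨i, shear u (Pi.single i 1) hu * shear (Pi.single i 1) (Pi.single i 1 - y) hy,
    fun X hX => ?_, ?_⟩
  · rw [mul_smul]
    refine blockTriangular_shear_smul hub _ (blockTriangular_shear_smul ?_ X hX)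
    rw [vecMulVec_sub, ← single_eq_single_vecMulVec_single]
    exact (blockTriangular_single le_rfl 1).sub hyb
  · rw [mul_smul, ← vecMulVec_single_eq_shear_smul_single]

end Shears

section CharpolyPreserver

variable {ι α : Type*} [Fintype ι] [DecidableEq ι] [LinearOrder α] {b : ι → α}
  {φ : Matrix ι ι ℂ → Matrix ι ι ℂ} {P Q : Matrix ι ι ℂ}

namespace IsCharpolyPreserver

theorem exists_map_smul_eq (h : IsCharpolyPreserver b φ) (hP : IsRankOneIdempotent P)
    (hPb : P.BlockTriangular b) : ∃ Q, IsRankOneIdempotent Q ∧ ∀ w : ℂ, φ (w • P) = w • Q := by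
  obtain ⟨i, S, hS, rfl⟩ := hP.exists_eq_smul_single hPb
  obtain ⟨T, hT⟩ := h.exists_frame fun d => hS _ (blockTriangular_diagonal d)
  refine ⟨T • single i i 1, (IsRankOneIdempotent.single i).conj T, fun w => ?_⟩
  have hw : w • single i i (1 : ℂ) = diagonal (Pi.single i w) := by
    rw [smul_single, smul_eq_mul, mul_one, diagonal_single]
  rw [← smul_comm S w, ← smul_comm T w, hw, hT]

theorem isRankOneIdempotent_map (h : IsCharpolyPreserver b φ) (hP : IsRankOneIdempotent P)
    (hPb : P.BlockTriangular b) : IsRankOneIdempotent (φ P) := by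
  obtain ⟨Q, hQ, hφ⟩ := h.exists_map_smul_eq hP hPb
  have hPQ : φ P = Q := by simpa using hφ 1
  rwa [hPQ]

theorem map_smul (h : IsCharpolyPreserver b φ) (hP : IsRankOneIdempotent P)
    (hPb : P.BlockTriangular b) (w : ℂ) : φ (w • P) = w • φ P := by
  obtain ⟨Q, -, hφ⟩ := h.exists_map_smul_eq hP hPb
  have hPQ : φ P = Q := by simpa using hφ 1
  rw [hφ, hPQ]

theorem mulOrthogonal_map (h : IsCharpolyPreserver b φ) (hP : IsRankOneIdempotent P)
    (hPb : P.BlockTriangular b) (hQ : IsRankOneIdempotent Q) (hQb : Q.BlockTriangular b)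
    (hPQ : MulOrthogonal P Q) : MulOrthogonal (φ P) (φ Q) :=
  (h.isRankOneIdempotent_map hP hPb).mulOrthogonal_of_commute (h.isRankOneIdempotent_map hQ hQb)
    (h.commute hPb hQb (hPQ.1.trans hPQ.2.symm))
    (h.injOn.ne hPb hQb (hP.ne_of_mulOrthogonal hPQ))

end IsCharpolyPreserver

end CharpolyPreserver

section RowIdempotents

variable {ι K α : Type*} [DecidableEq ι] [Field K] [LinearOrder α] {b : ι → α}
  {i j k : ι} {t : K} {x y : ι → K} {P Q : Matrix ι ι K}

/-- The idempotent `Eᵢᵢ + t Eᵢⱼ` (for `i ≠ j`). -/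
def rowIdempotent (i j : ι) (t : K) : Matrix ι ι K :=
  vecMulVec (Pi.single i 1) (Pi.single i 1 + Pi.single j t)

theorem transpose_rowIdempotent (i j : ι) (t : K) :
    (rowIdempotent i j t)ᵀ = vecMulVec (Pi.single i 1 + Pi.single j t) (Pi.single i 1) :=
  transpose_vecMulVec _ _

theorem rowIdempotent_zero (i j : ι) : rowIdempotent i j (0 : K) = single i i 1 := by
  rw [rowIdempotent, Pi.single_zero, add_zero, single_eq_single_vecMulVec_single]

theorem rowIdempotent_apply (hij : i ≠ j) : rowIdempotent i j t i j = t := by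
  simp [rowIdempotent, vecMulVec_apply, hij]

theorem blockTriangular_vecMulVec_single :
    (vecMulVec (Pi.single i 1) y).BlockTriangular b ↔ ∀ j, y j ≠ 0 → b i ≤ b j := by
  simp [blockTriangular_vecMulVec_iff, Pi.single_apply, forall_comm (α := ι)]

theorem blockTriangular_vecMulVec_single_right :
    (vecMulVec x (Pi.single i 1)).BlockTriangular b ↔ ∀ j, x j ≠ 0 → b j ≤ b i := by
  simp [blockTriangular_vecMulVec_iff, Pi.single_apply]

theorem blockTriangular_rowIdempotent (hij : t ≠ 0 → b i ≤ b j) :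
    (rowIdempotent i j t).BlockTriangular b :=
  blockTriangular_vecMulVec_single.2 fun l hl => by
    by_cases hi : l = i <;> by_cases hj : l = j <;> simp_all

theorem blockTriangular_transpose_rowIdempotent (hij : t ≠ 0 → b j ≤ b i) :
    (rowIdempotent i j t)ᵀ.BlockTriangular b := by
  rw [transpose_rowIdempotent, blockTriangular_vecMulVec_single_right]
  intro l hl
  by_cases hi : l = i <;> by_cases hj : l = j <;> simp_all

variable [Fintype ι]

theorem isRankOneIdempotent_vecMulVec_single (hy : y i = 1) :
    IsRankOneIdempotent (vecMulVec (Pi.single i 1) y) :=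
  ⟨_, _, by simpa, rfl⟩

theorem isRankOneIdempotent_rowIdempotent (hij : i ≠ j) :
    IsRankOneIdempotent (rowIdempotent i j t) :=
  isRankOneIdempotent_vecMulVec_single (by simp [hij])

theorem mulOrthogonal_rowIdempotent (hij : i ≠ j) (hkj : k ≠ j) (hik : i ≠ k) (t s : K) :
    MulOrthogonal (rowIdempotent i j t) (rowIdempotent k j s) :=
  (mulOrthogonal_vecMulVec_iff (by simp [hij]) (by simp [hkj])).2
    (by simp [hij, hkj, hik, hik.symm])

theorem mulOrthogonal_vecMulVec_single (hy : y i = 1) (hij : i ≠ j) :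
    MulOrthogonal (vecMulVec (Pi.single i 1) y) (rowIdempotent j i (-y j))ᵀ := by
  rw [transpose_rowIdempotent, mulOrthogonal_vecMulVec_iff] <;> simp [hy, hij]

theorem eq_vecMulVec_single_of_mulOrthogonal (hP : IsRankOneIdempotent P) (hy : y i = 1)
    (h : ∀ j ≠ i, MulOrthogonal P (rowIdempotent j i (-y j))ᵀ) :
    P = vecMulVec (Pi.single i 1) y := by
  obtain ⟨x, w, hxw, rfl⟩ := hP
  have horth (j : ι) (hj : j ≠ i) : w j = w i * y j ∧ x j = 0 := by
    have hj' := h j hj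
    rw [transpose_rowIdempotent, mulOrthogonal_vecMulVec_iff hxw (by simp [hj])] at hj'
    simpa [dotProduct_add, add_neg_eq_zero] using hj'
  have hx : x = x i • Pi.single i 1 := funext fun j => by
    by_cases hj : j = i
    · simp [hj]
    · simp [hj, (horth j hj).2]
  have hw : w = w i • y := funext fun j => by
    by_cases hj : j = i
    · simp [hj, hy]
    · simp [(horth j hj).1]
  have hone : x i * w i = 1 := by
    rw [hx] at hxw
    simpa using hxw
  rw [hx, hw, smul_vecMulVec, vecMulVec_smul, smul_smul, hone, one_smul]

theorem vecMulVec_eq_rowIdempotent (hxy : y ⬝ᵥ x = 1) (hx : ∀ l ≠ i, x l = 0)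
    (hy : ∀ l, l ≠ i → l ≠ j → y l = 0) (hij : i ≠ j) :
    vecMulVec x y = rowIdempotent i j (x i * y j) := by
  obtain ⟨c, rfl⟩ : ∃ c, x = Pi.single i c :=
    ⟨x i, funext fun l => by by_cases hl : l = i <;> simp_all⟩
  have hc : c * y i = 1 := by simpa [mul_comm] using hxy
  ext a l
  by_cases ha : a = i <;> by_cases hli : l = i <;> by_cases hlj : l = j <;>
    simp_all [rowIdempotent, vecMulVec_apply]

theorem eq_zero_of_mulOrthogonal_single (hxy : y ⬝ᵥ x = 1)
    (h : MulOrthogonal (vecMulVec x y) (single k k 1)) : x k = 0 ∧ y k = 0 := by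
  rw [single_eq_single_vecMulVec_single, mulOrthogonal_vecMulVec_iff hxy (by simp)] at h
  simpa [and_comm] using h

theorem apply_ne_zero_or_of_ne_single (hij : i ≠ j) (hxy : y ⬝ᵥ x = 1)
    (hsupp : ∀ l, l ≠ i → l ≠ j → x l = 0 ∧ y l = 0) (hne : vecMulVec x y ≠ single i i 1) :
    x j ≠ 0 ∨ y j ≠ 0 := by
  by_contra! h
  have hx (l : ι) (hl : l ≠ i) : x l = 0 :=
    if hlj : l = j then hlj ▸ h.1 else (hsupp l hl hlj).1
  have hrow := vecMulVec_eq_rowIdempotent hxy hx (fun l hi hj => (hsupp l hi hj).2) hij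
  rw [h.2, mul_zero, rowIdempotent_zero] at hrow
  exact hne hrow

/-- The rank-one idempotents other than `Eᵢᵢ` living on the indices `i` and `j`. -/
structure IsCornerIdempotent (i j : ι) (P : Matrix ι ι K) : Prop where
  isRankOneIdempotent : IsRankOneIdempotent P
  ne_single : P ≠ single i i 1
  mulOrthogonal_single (l : ι) : l ≠ i → l ≠ j → MulOrthogonal P (single l l 1)

theorem isCornerIdempotent_rowIdempotent (hij : i ≠ j) (ht : t ≠ 0) :
    IsCornerIdempotent i j (rowIdempotent i j t) where
  isRankOneIdempotent := isRankOneIdempotent_rowIdempotent hij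
  ne_single h := ht <| by simpa [rowIdempotent_apply hij, hij] using congrFun₂ h i j
  mulOrthogonal_single l hli hlj := by
    rw [rowIdempotent, single_eq_single_vecMulVec_single, mulOrthogonal_vecMulVec_iff] <;>
      simp [hij, hli, hlj, hli.symm]

theorem IsCornerIdempotent.transpose (hP : IsCornerIdempotent i j P) :
    IsCornerIdempotent i j Pᵀ where
  isRankOneIdempotent := hP.isRankOneIdempotent.transpose
  ne_single h := hP.ne_single <| by rw [← transpose_inj, h, transpose_single]
  mulOrthogonal_single l hi hj := by
    simpa using (hP.mulOrthogonal_single l hi hj).transpose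

theorem IsCornerIdempotent.transpose_notMem_range_rowIdempotent (hij : i ≠ j)
    (hP : IsCornerIdempotent i j P) (h : P ∈ Set.range (rowIdempotent i j)) :
    Pᵀ ∉ Set.range (rowIdempotent i j) := by
  rintro ⟨s, hs⟩
  obtain ⟨t, rfl⟩ := h
  have ht : t = 0 := by
    simpa [rowIdempotent, vecMulVec_apply, hij.symm, eq_comm] using congrFun₂ hs j i
  exact hP.ne_single (ht ▸ rowIdempotent_zero i j)

theorem IsCornerIdempotent.rowIdempotent_or_transpose (hij : i ≠ j) (hkj : k ≠ j) (hik : i ≠ k)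
    (hP : IsCornerIdempotent i j P) (hQ : IsCornerIdempotent k j Q) (hPQ : MulOrthogonal P Q) :
    (P ∈ Set.range (rowIdempotent i j) ∧ Q ∈ Set.range (rowIdempotent k j)) ∨
      (Pᵀ ∈ Set.range (rowIdempotent i j) ∧ Qᵀ ∈ Set.range (rowIdempotent k j)) := by
  obtain ⟨⟨x, y, hxy, rfl⟩, hP₁, hP₀⟩ := hP
  obtain ⟨⟨z, w, hzw, rfl⟩, hQ₁, hQ₀⟩ := hQ
  replace hP₀ l hi hj := eq_zero_of_mulOrthogonal_single hxy (hP₀ l hi hj)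
  replace hQ₀ l hk hj := eq_zero_of_mulOrthogonal_single hzw (hQ₀ l hk hj)
  obtain ⟨hyz, hwx⟩ := (mulOrthogonal_vecMulVec_iff hxy hzw).1 hPQ
  have hdisj (l : ι) (hl : l ≠ j) : (x l = 0 ∧ y l = 0) ∨ (z l = 0 ∧ w l = 0) :=
    if hli : l = i then .inr (hQ₀ l (hli ▸ hik) hl) else .inl (hP₀ l hli hl)
  rw [dotProduct, Fintype.sum_eq_single j fun l hl =>
    mul_eq_zero.2 ((hdisj l hl).imp And.right And.left)] at hyz
  rw [dotProduct, Fintype.sum_eq_single j fun l hl =>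
    mul_eq_zero.2 ((hdisj l hl).symm.imp And.right And.left)] at hwx
  have hxj := apply_ne_zero_or_of_ne_single hij hxy hP₀ hP₁
  have hzj := apply_ne_zero_or_of_ne_single hkj hzw hQ₀ hQ₁
  have hcases : (x j = 0 ∧ z j = 0) ∨ (y j = 0 ∧ w j = 0) := by
    simp only [mul_eq_zero] at hyz hwx
    tauto
  rcases hcases with ⟨hx, hz⟩ | ⟨hy, hw⟩
  · exact .inl ⟨⟨_, (vecMulVec_eq_rowIdempotent hxy (fun l hl => by grind) (by grind) hij).symm⟩,
      ⟨_, (vecMulVec_eq_rowIdempotent hzw (fun l hl => by grind) (by grind) hkj).symm⟩⟩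
  · rw [dotProduct_comm] at hxy hzw
    rw [transpose_vecMulVec, transpose_vecMulVec]
    exact .inr ⟨⟨_, (vecMulVec_eq_rowIdempotent hxy (fun l hl => by grind) (by grind) hij).symm⟩,
      ⟨_, (vecMulVec_eq_rowIdempotent hzw (fun l hl => by grind) (by grind) hkj).symm⟩⟩

end RowIdempotents

section NormalizedPreserver

variable {ι α : Type*} [Fintype ι] [DecidableEq ι] [LinearOrder α] {b : ι → α}
  {φ : Matrix ι ι ℂ → Matrix ι ι ℂ} {P Q : Matrix ι ι ℂ} {i j k : ι}

/-- A preserver of characteristic polynomials that fixes the diagonal idempotents. -/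
structure IsNormalizedPreserver (b : ι → α) (φ : Matrix ι ι ℂ → Matrix ι ι ℂ) : Prop
    extends IsCharpolyPreserver b φ where
  map_single (k : ι) : φ (single k k 1) = single k k 1

namespace IsNormalizedPreserver

protected theorem transpose (h : IsNormalizedPreserver b φ) :
    IsNormalizedPreserver b fun X => (φ X)ᵀ where
  __ := h.toIsCharpolyPreserver.transpose
  map_single k := by rw [h.map_single, transpose_single]

theorem isCornerIdempotent_map (h : IsNormalizedPreserver b φ) (hP : IsCornerIdempotent i j P)
    (hPb : P.BlockTriangular b) : IsCornerIdempotent i j (φ P) where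
  isRankOneIdempotent := h.isRankOneIdempotent_map hP.isRankOneIdempotent hPb
  ne_single := h.map_single i ▸ h.injOn.ne hPb (blockTriangular_single le_rfl 1) hP.ne_single
  mulOrthogonal_single l hi hj := h.map_single l ▸
    h.mulOrthogonal_map hP.isRankOneIdempotent hPb (.single l) (blockTriangular_single le_rfl 1)
      (hP.mulOrthogonal_single l hi hj)

theorem map_vecMulVec_single {y y' : ι → ℂ} (h : IsNormalizedPreserver b φ) (hy : y i = 1)
    (hy' : y' i = 1) (hb : (vecMulVec (Pi.single i 1) y).BlockTriangular b)
    (hφ : ∀ j ≠ i, φ (rowIdempotent j i (-y j))ᵀ = (rowIdempotent j i (-y' j))ᵀ) :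
    φ (vecMulVec (Pi.single i 1) y) = vecMulVec (Pi.single i 1) y' := by
  have hP := isRankOneIdempotent_vecMulVec_single hy
  refine eq_vecMulVec_single_of_mulOrthogonal (h.isRankOneIdempotent_map hP hb) hy' fun j hj => ?_
  rw [← hφ j hj]
  refine h.mulOrthogonal_map hP hb (isRankOneIdempotent_rowIdempotent hj).transpose ?_
    (mulOrthogonal_vecMulVec_single hy hj.symm)
  exact blockTriangular_transpose_rowIdempotent fun hyj =>
    blockTriangular_vecMulVec_single.1 hb j (by simpa using hyj)

theorem map_vecMulVec_single_right {x x' : ι → ℂ} (h : IsNormalizedPreserver b φ) (hx : x i = 1)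
    (hx' : x' i = 1) (hb : (vecMulVec x (Pi.single i 1)).BlockTriangular b)
    (hφ : ∀ j ≠ i, φ (rowIdempotent j i (-x j)) = rowIdempotent j i (-x' j)) :
    φ (vecMulVec x (Pi.single i 1)) = vecMulVec x' (Pi.single i 1) := by
  have hP := (isRankOneIdempotent_vecMulVec_single hx).transpose
  rw [transpose_vecMulVec] at hP
  rw [← transpose_inj, transpose_vecMulVec]
  refine eq_vecMulVec_single_of_mulOrthogonal (h.isRankOneIdempotent_map hP hb).transpose hx'
    fun j hj => ?_
  rw [← hφ j hj]
  refine (h.mulOrthogonal_map hP hb (isRankOneIdempotent_rowIdempotent hj) ?_ ?_).transpose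
  · exact blockTriangular_rowIdempotent fun hxj =>
      blockTriangular_vecMulVec_single_right.1 hb j (by simpa using hxj)
  · simpa using (mulOrthogonal_vecMulVec_single hx hj.symm).transpose

end IsNormalizedPreserver

end NormalizedPreserver

section Dichotomy

variable {ι α : Type*} [DecidableEq ι] {φ : Matrix ι ι ℂ → Matrix ι ι ℂ} {i j k : ι}

/-- `φ` maps the line `Eᵢᵢ + ℂ Eᵢⱼ` into itself; the alternative is that it maps this line into
its transpose. -/
def MapsRows (φ : Matrix ι ι ℂ → Matrix ι ι ℂ) (i j : ι) : Prop :=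
  ∀ t : ℂ, φ (rowIdempotent i j t) ∈ Set.range (rowIdempotent i j)

variable [Fintype ι] [LinearOrder α] {b : ι → α}

namespace IsNormalizedPreserver

theorem mapsRows_of_ne_zero (h : IsNormalizedPreserver b φ)
    (hφ : ∀ t ≠ 0, φ (rowIdempotent i j t) ∈ Set.range (rowIdempotent i j)) : MapsRows φ i j := by
  intro t
  by_cases ht : t = 0
  · exact ⟨0, by rw [ht, rowIdempotent_zero, h.map_single]⟩
  · exact hφ t ht

theorem map_rowIdempotent_of_transpose (h : IsNormalizedPreserver b φ) (hij : i ≠ j)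
    (hb : b j ≤ b i) {t s : ℂ} (hts : φ (rowIdempotent i j t)ᵀ = (rowIdempotent i j s)ᵀ) :
    φ (rowIdempotent j i (-t)) = rowIdempotent j i (-s) := by
  refine h.map_vecMulVec_single (by simp [hij.symm]) (by simp [hij.symm])
    (blockTriangular_rowIdempotent fun _ => hb) fun l hl => ?_
  by_cases hli : l = i
  · subst hli
    simpa [hij] using hts
  · simp [hl, hli, rowIdempotent_zero, h.map_single]

theorem mapsRows_not_transpose (h : IsNormalizedPreserver b φ) (hij : i ≠ j) (hb : b i ≤ b j)
    (hφ : MapsRows φ i j) : ¬ MapsRows (fun X => (φ X)ᵀ) i j := fun hφ' =>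
  (h.isCornerIdempotent_map (isCornerIdempotent_rowIdempotent hij one_ne_zero)
    (blockTriangular_rowIdempotent fun _ => hb)).transpose_notMem_range_rowIdempotent hij
    (hφ 1) (hφ' 1)

/-- Orthogonal idempotents sharing the index `j` have images of the same shape, so a single
member of one family determines the shape of the other one. -/
theorem forall_map_mem_range_or {P Q : ℂ → Matrix ι ι ℂ}
    (h : IsNormalizedPreserver b φ) (hij : i ≠ j) (hkj : k ≠ j) (hik : i ≠ k)
    (hP : ∀ t ≠ 0, IsCornerIdempotent i j (P t)) (hQ : ∀ s ≠ 0, IsCornerIdempotent k j (Q s))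
    (hPb : ∀ t, (P t).BlockTriangular b) (hQb : ∀ s, (Q s).BlockTriangular b)
    (hPQ : ∀ t s, MulOrthogonal (P t) (Q s)) :
    ((∀ t ≠ 0, φ (P t) ∈ Set.range (rowIdempotent i j)) ∧
        ∀ s ≠ 0, φ (Q s) ∈ Set.range (rowIdempotent k j)) ∨
      ((∀ t ≠ 0, (φ (P t))ᵀ ∈ Set.range (rowIdempotent i j)) ∧
        ∀ s ≠ 0, (φ (Q s))ᵀ ∈ Set.range (rowIdempotent k j)) := by
  have hor (t s : ℂ) (ht : t ≠ 0) (hs : s ≠ 0) :=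
    IsCornerIdempotent.rowIdempotent_or_transpose hij hkj hik
      (h.isCornerIdempotent_map (hP t ht) (hPb t)) (h.isCornerIdempotent_map (hQ s hs) (hQb s))
      (h.mulOrthogonal_map (hP t ht).isRankOneIdempotent (hPb t)
        (hQ s hs).isRankOneIdempotent (hQb s) (hPQ t s))
  have hP₁ := (h.isCornerIdempotent_map (hP 1 one_ne_zero)
    (hPb 1)).transpose_notMem_range_rowIdempotent hij
  have hQ₁ := (h.isCornerIdempotent_map (hQ 1 one_ne_zero)
    (hQb 1)).transpose_notMem_range_rowIdempotent hkj
  rcases hor 1 1 one_ne_zero one_ne_zero with ⟨hP₀, hQ₀⟩ | ⟨hP₀, hQ₀⟩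
  · exact .inl ⟨fun t ht => ((hor t 1 ht one_ne_zero).resolve_right fun h => hQ₁ hQ₀ h.2).1,
      fun s hs => ((hor 1 s one_ne_zero hs).resolve_right fun h => hP₁ hP₀ h.1).2⟩
  · exact .inr ⟨fun t ht => ((hor t 1 ht one_ne_zero).resolve_left fun h => hQ₁ h.2 hQ₀).1,
      fun s hs => ((hor 1 s one_ne_zero hs).resolve_left fun h => hP₁ h.1 hP₀).2⟩

theorem mapsRows_or_of_le_right (h : IsNormalizedPreserver b φ) (hij : i ≠ j) (hkj : k ≠ j)
    (hik : i ≠ k) (hi : b i ≤ b j) (hk : b k ≤ b j) :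
    (MapsRows φ i j ∧ MapsRows φ k j) ∨
      (MapsRows (fun X => (φ X)ᵀ) i j ∧ MapsRows (fun X => (φ X)ᵀ) k j) := by
  refine (h.forall_map_mem_range_or hij hkj hik
    (fun _ => isCornerIdempotent_rowIdempotent hij) (fun _ => isCornerIdempotent_rowIdempotent hkj)
    (fun _ => blockTriangular_rowIdempotent fun _ => hi)
    (fun _ => blockTriangular_rowIdempotent fun _ => hk)
    (mulOrthogonal_rowIdempotent hij hkj hik)).imp ?_ ?_ <;>
  rintro ⟨hP, hQ⟩
  · exact ⟨h.mapsRows_of_ne_zero hP, h.mapsRows_of_ne_zero hQ⟩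
  · exact ⟨h.transpose.mapsRows_of_ne_zero hP, h.transpose.mapsRows_of_ne_zero hQ⟩

theorem mapsRows_of_transpose (h : IsNormalizedPreserver b φ) (hij : i ≠ j) (hb : b j ≤ b i)
    (hφ : ∀ t ≠ 0, (φ (rowIdempotent i j t)ᵀ)ᵀ ∈ Set.range (rowIdempotent i j)) :
    MapsRows φ j i :=
  h.mapsRows_of_ne_zero fun t ht => by
    obtain ⟨s, hs⟩ := hφ (-t) (neg_ne_zero.2 ht)
    have hts : φ (rowIdempotent i j (-t))ᵀ = (rowIdempotent i j s)ᵀ := by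
      rw [hs, transpose_transpose]
    exact ⟨-s, by rw [← h.map_rowIdempotent_of_transpose hij hb hts, neg_neg]⟩

theorem mapsRows_or_of_le_left (h : IsNormalizedPreserver b φ) (hij : i ≠ j) (hkj : k ≠ j)
    (hik : i ≠ k) (hi : b j ≤ b i) (hk : b j ≤ b k) :
    (MapsRows φ j i ∧ MapsRows φ j k) ∨
      (MapsRows (fun X => (φ X)ᵀ) j i ∧ MapsRows (fun X => (φ X)ᵀ) j k) := by
  refine (h.forall_map_mem_range_or hij hkj hik
    (fun _ ht => (isCornerIdempotent_rowIdempotent hij ht).transpose)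
    (fun _ hs => (isCornerIdempotent_rowIdempotent hkj hs).transpose)
    (fun _ => blockTriangular_transpose_rowIdempotent fun _ => hi)
    (fun _ => blockTriangular_transpose_rowIdempotent fun _ => hk)
    fun t s => (mulOrthogonal_rowIdempotent hij hkj hik t s).transpose).symm.imp ?_ ?_ <;>
  rintro ⟨hP, hQ⟩
  · exact ⟨h.mapsRows_of_transpose hij hi hP, h.mapsRows_of_transpose hkj hk hQ⟩
  · exact ⟨h.transpose.mapsRows_of_transpose hij hi (by simpa using hP),
      h.transpose.mapsRows_of_transpose hkj hk (by simpa using hQ)⟩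

end IsNormalizedPreserver

theorem exists_ne_and_ne {ι : Type*} [Fintype ι] (hι : 3 ≤ Fintype.card ι) (i j : ι) :
    ∃ k, k ≠ i ∧ k ≠ j := by
  classical
  obtain ⟨k, -, hk⟩ := Finset.exists_mem_notMem_of_card_lt_card
    (Finset.card_le_two.trans_lt hι : ({i, j} : Finset ι).card < Finset.univ.card)
  exact ⟨k, by simpa [not_or] using hk⟩

namespace IsNormalizedPreserver

theorem mapsRows_of_mapsRows (h : IsNormalizedPreserver b φ) (hι : 3 ≤ Fintype.card ι) {o a : ι}
    (ho : ∀ i, b o ≤ b i) (ha : a ≠ o) (hoa : MapsRows φ o a) (hij : i ≠ j) (hb : b i ≤ b j) :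
    MapsRows φ i j := by
  have hrow {l m n : ι} (hml : m ≠ l) (hnl : n ≠ l) (hlm : b l ≤ b m) (hln : b l ≤ b n)
      (hφ : MapsRows φ l m) : MapsRows φ l n := by
    by_cases hmn : m = n
    · rwa [← hmn]
    · exact ((h.mapsRows_or_of_le_left hml hnl hmn hlm hln).resolve_right fun h' =>
        h.mapsRows_not_transpose hml.symm hlm hφ h'.1).2
  have hcol {l m : ι} (hlm : l ≠ m) (hmo : m ≠ o) (hb : b l ≤ b m) : MapsRows φ l m := by
    have hom : MapsRows φ o m := hrow ha hmo (ho a) (ho m) hoa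
    by_cases hlo : l = o
    · rwa [hlo]
    · exact ((h.mapsRows_or_of_le_right hlm hmo.symm hlo hb (ho m)).resolve_right fun h' =>
        h.mapsRows_not_transpose hmo.symm (ho m) hom h'.2).1
  by_cases hjo : j = o
  · subst hjo
    obtain ⟨m, hmi, hmj⟩ := exists_ne_and_ne hι i j
    have him := hb.trans (ho m)
    exact hrow hmi hij.symm him hb (hcol hmi.symm hmj him)
  · exact hcol hij hjo hb

theorem forall_mapsRows_or (h : IsNormalizedPreserver b φ) (hι : 3 ≤ Fintype.card ι) :
    (∀ i j, i ≠ j → b i ≤ b j → MapsRows φ i j) ∨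
      ∀ i j, i ≠ j → b i ≤ b j → MapsRows (fun X => (φ X)ᵀ) i j := by
  have hne : Nonempty ι := Fintype.card_pos_iff.1 (by omega)
  obtain ⟨o, ho⟩ := Finite.exists_min b
  obtain ⟨a, hao, -⟩ := exists_ne_and_ne hι o o
  obtain ⟨c, hco, hca⟩ := exists_ne_and_ne hι o a
  refine (h.mapsRows_or_of_le_left hao hco hca.symm (ho a) (ho c)).imp ?_ ?_
  · exact fun hoa _ _ hij hb => h.mapsRows_of_mapsRows hι ho hao hoa.1 hij hb
  · exact fun hoa _ _ hij hb => h.transpose.mapsRows_of_mapsRows hι ho hao hoa.1 hij hb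

end IsNormalizedPreserver

end Dichotomy

section Coboundary

/-- A multiplicative cocycle on the pairs `(i, j)` with `b i ≤ b j` is a coboundary: `c j` is
read off the pair `(o, j)` with `b o` minimal. -/
theorem exists_eq_div_of_cocycle {ι α K : Type*} [Fintype ι] [LinearOrder α] [Field K] {b : ι → α}
    (hι : 3 ≤ Fintype.card ι) {L : ι → ι → K}
    (hL₀ : ∀ i j, i ≠ j → b i ≤ b j → L i j ≠ 0)
    (hL : ∀ i k j, i ≠ k → k ≠ j → i ≠ j → b i ≤ b k → b k ≤ b j → L i j = L i k * L k j) :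
    ∃ c : ι → K, (∀ i, c i ≠ 0) ∧ ∀ i j, i ≠ j → b i ≤ b j → L i j = c i / c j := by
  classical
  have hne : Nonempty ι := Fintype.card_pos_iff.1 (by omega)
  obtain ⟨o, ho⟩ := Finite.exists_min b
  set c : ι → K := fun j => if j = o then 1 else (L o j)⁻¹
  have hc (j : ι) (hj : j ≠ o) : c j = (L o j)⁻¹ := if_neg hj
  have hLo (j : ι) (hj : j ≠ o) : L o j ≠ 0 := hL₀ o j hj.symm (ho j)
  have hright (i j : ι) (hij : i ≠ j) (hjo : j ≠ o) (hb : b i ≤ b j) : L i j = c i / c j := by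
    rcases eq_or_ne i o with rfl | hio
    · simp [c, hjo]
    · rw [hc i hio, hc j hjo, hL o i j hio.symm hij hjo.symm (ho i) hb]
      have := hLo i hio
      field_simp
  have hc₀ (j : ι) : c j ≠ 0 := by
    by_cases hj : j = o
    · simp [c, hj]
    · simpa [hc j hj] using hLo j hj
  refine ⟨c, hc₀, fun i j hij hb => ?_⟩
  rcases eq_or_ne j o with rfl | hjo
  · obtain ⟨m, hmi, hmj⟩ := exists_ne_and_ne hι i j
    have him := hL i j m hij hmj.symm hmi.symm hb (ho m)
    rw [hright i m hmi.symm hmj (hb.trans (ho m)), hright j m hmj.symm hmj (ho m)] at him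
    have hj₀ := hc₀ j
    have hm₀ := hc₀ m
    field_simp at him ⊢
    exact him.symm
  · exact hright i j hij hjo hb

end Coboundary

section Coefficients

variable {ι α : Type*} [DecidableEq ι] {φ : Matrix ι ι ℂ → Matrix ι ι ℂ} {i j k : ι}

/-- The function `f` with `φ (Eᵢᵢ + t Eᵢⱼ) = Eᵢᵢ + f t Eᵢⱼ`, if there is one. -/
def rowCoeff (φ : Matrix ι ι ℂ → Matrix ι ι ℂ) (i j : ι) (t : ℂ) : ℂ :=
  φ (rowIdempotent i j t) i j

theorem tendsto_smul_rowIdempotent (i j : ι) :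
    Filter.Tendsto (fun w : ℂ => w • rowIdempotent i j w⁻¹) (nhdsWithin 0 {0}ᶜ)
      (nhds (single i j 1)) := by
  have hcont : Continuous fun w : ℂ =>
      vecMulVec (Pi.single i 1) (w • Pi.single i 1 + Pi.single j (1 : ℂ)) := by
    fun_prop
  have hlim := (hcont.tendsto 0).mono_left (nhdsWithin_le_nhds (s := {0}ᶜ))
  rw [zero_smul, zero_add, ← single_eq_single_vecMulVec_single] at hlim
  refine hlim.congr' (eventually_nhdsWithin_of_forall fun w hw => ?_)
  have hw₀ : w ≠ 0 := hw
  simp only [rowIdempotent, ← vecMulVec_smul, smul_add, ← Pi.single_smul, smul_eq_mul,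
    mul_inv_cancel₀ hw₀]

theorem MapsRows.map_rowIdempotent (hφ : MapsRows φ i j) (hij : i ≠ j) (t : ℂ) :
    φ (rowIdempotent i j t) = rowIdempotent i j (rowCoeff φ i j t) := by
  obtain ⟨s, hs⟩ := hφ t
  rw [rowCoeff, ← hs, rowIdempotent_apply hij]

variable [Fintype ι] [LinearOrder α] {b : ι → α}

namespace IsNormalizedPreserver

theorem rowCoeff_zero (h : IsNormalizedPreserver b φ) (hij : i ≠ j) : rowCoeff φ i j 0 = 0 := by
  rw [rowCoeff, rowIdempotent_zero, h.map_single]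
  exact single_apply_of_col_ne _ _ hij _

theorem rowCoeff_ne_zero (h : IsNormalizedPreserver b φ) (hφ : MapsRows φ i j) (hij : i ≠ j)
    (hb : b i ≤ b j) {t : ℂ} (ht : t ≠ 0) : rowCoeff φ i j t ≠ 0 := by
  intro h₀
  refine (h.isCornerIdempotent_map (isCornerIdempotent_rowIdempotent hij ht)
    (blockTriangular_rowIdempotent fun _ => hb)).ne_single ?_
  rw [hφ.map_rowIdempotent hij, h₀, rowIdempotent_zero]

theorem map_rowIdempotent (h : IsNormalizedPreserver b φ)
    (hφ : ∀ i j, i ≠ j → b i ≤ b j → MapsRows φ i j) (hij : i ≠ j) {t : ℂ}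
    (ht : t ≠ 0 → b i ≤ b j) : φ (rowIdempotent i j t) = rowIdempotent i j (rowCoeff φ i j t) := by
  by_cases ht₀ : t = 0
  · rw [ht₀, h.rowCoeff_zero hij, rowIdempotent_zero, h.map_single]
  · exact (hφ i j hij (ht ht₀)).map_rowIdempotent hij t

theorem map_vecMulVec_single_right_of_mapsRows (h : IsNormalizedPreserver b φ)
    (hφ : ∀ i j, i ≠ j → b i ≤ b j → MapsRows φ i j) {x x' : ι → ℂ} (hx : x i = 1)
    (hb : (vecMulVec x (Pi.single i 1)).BlockTriangular b) (hx' : x' i = 1)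
    (hxx' : ∀ j ≠ i, x' j = -rowCoeff φ j i (-x j)) :
    φ (vecMulVec x (Pi.single i 1)) = vecMulVec x' (Pi.single i 1) :=
  h.map_vecMulVec_single_right hx hx' hb fun j hj => by
    rw [hxx' j hj, neg_neg]
    exact h.map_rowIdempotent hφ hj fun hxj =>
      blockTriangular_vecMulVec_single_right.1 hb j (neg_ne_zero.1 hxj)

theorem map_vecMulVec_single_of_mapsRows (h : IsNormalizedPreserver b φ)
    (hφ : ∀ i j, i ≠ j → b i ≤ b j → MapsRows φ i j) {y y' : ι → ℂ} (hy : y i = 1)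
    (hb : (vecMulVec (Pi.single i 1) y).BlockTriangular b) (hy' : y' i = 1)
    (hyy' : ∀ j ≠ i, y' j = rowCoeff φ i j (y j)) :
    φ (vecMulVec (Pi.single i 1) y) = vecMulVec (Pi.single i 1) y' :=
  h.map_vecMulVec_single hy hy' hb fun j hj => by
    have hT := blockTriangular_transpose_rowIdempotent (i := j) (t := -y j) fun hyj =>
      blockTriangular_vecMulVec_single.1 hb j (neg_ne_zero.1 hyj)
    rw [transpose_rowIdempotent] at hT
    rw [transpose_rowIdempotent, transpose_rowIdempotent]
    refine h.map_vecMulVec_single_right_of_mapsRows hφ (by simp [hj]) hT (by simp [hj])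
      fun l hl => ?_
    by_cases hli : l = i
    · simp [hli, hj.symm, hyy' j hj]
    · simp [hli, hl, h.rowCoeff_zero hl]

theorem map_vecMulVec_single_add_add (h : IsNormalizedPreserver b φ)
    (hφ : ∀ i j, i ≠ j → b i ≤ b j → MapsRows φ i j) (hij : i ≠ j) (hik : i ≠ k) (hjk : j ≠ k)
    (hbij : b i ≤ b j) (hbik : b i ≤ b k) (t s : ℂ) :
    φ (vecMulVec (Pi.single i 1) (Pi.single i 1 + Pi.single j t + Pi.single k s)) =
      vecMulVec (Pi.single i 1)
        (Pi.single i 1 + Pi.single j (rowCoeff φ i j t) + Pi.single k (rowCoeff φ i k s)) := by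
  refine h.map_vecMulVec_single_of_mapsRows hφ (by simp [hij, hik])
    (blockTriangular_vecMulVec_single.2 fun l hl => ?_) (by simp [hij, hik]) fun l hl => ?_
  · by_cases hli : l = i <;> by_cases hlj : l = j <;> by_cases hlk : l = k <;> simp_all
  · have h₀ := h.rowCoeff_zero hl.symm
    by_cases hlj : l = j <;> by_cases hlk : l = k <;> simp_all

theorem map_vecMulVec_single_right_add_add (h : IsNormalizedPreserver b φ)
    (hφ : ∀ i j, i ≠ j → b i ≤ b j → MapsRows φ i j) (hji : j ≠ i) (hki : k ≠ i) (hjk : j ≠ k)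
    (hbji : b j ≤ b i) (hbki : b k ≤ b i) (t s : ℂ) :
    φ (vecMulVec (Pi.single i 1 + Pi.single j (-t) + Pi.single k (-s)) (Pi.single i 1)) =
      vecMulVec (Pi.single i 1 + Pi.single j (-rowCoeff φ j i t) +
        Pi.single k (-rowCoeff φ k i s)) (Pi.single i 1) := by
  refine h.map_vecMulVec_single_right_of_mapsRows hφ (by simp [hji.symm, hki.symm])
    (blockTriangular_vecMulVec_single_right.2 fun l hl => ?_) (by simp [hji.symm, hki.symm])
    fun l hl => ?_
  · by_cases hli : l = i <;> by_cases hlj : l = j <;> by_cases hlk : l = k <;> simp_all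
  · have h₀ := h.rowCoeff_zero hl
    by_cases hlj : l = j <;> by_cases hlk : l = k <;> simp_all

/-- Apply `φ` to the orthogonal idempotents `eᵢ (eᵢ + t eⱼ + s eₖ)ᵗ` and
`(eⱼ - u eₖ - (t - su) eᵢ) eⱼᵗ`. -/
theorem rowCoeff_sub_rowCoeff (h : IsNormalizedPreserver b φ)
    (hφ : ∀ i j, i ≠ j → b i ≤ b j → MapsRows φ i j) (hik : i ≠ k) (hkj : k ≠ j) (hij : i ≠ j)
    (hbik : b i ≤ b k) (hbkj : b k ≤ b j) (t s u : ℂ) :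
    rowCoeff φ i j t - rowCoeff φ i j (t - s * u) = rowCoeff φ i k s * rowCoeff φ k j u := by
  set r : ι → ℂ := Pi.single i 1 + Pi.single j t + Pi.single k s
  set c : ι → ℂ := Pi.single j 1 + Pi.single k (-u) + Pi.single i (-(t - s * u))
  have hdot (t s v u : ℂ) : (Pi.single i 1 + Pi.single j t + Pi.single k s : ι → ℂ) ⬝ᵥ
      (Pi.single j 1 + Pi.single k v + Pi.single i u) = t + s * v + u := by
    simp [hij, hik, hik.symm, hkj, hkj.symm, hij.symm, mul_comm, add_comm, add_left_comm]
  have hri : r i = 1 := by simp [r, hij, hik]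
  have hcj : c j = 1 := by simp [c, hij.symm, hkj.symm]
  have hbij := hbik.trans hbkj
  have hr : (vecMulVec (Pi.single i 1) r).BlockTriangular b := by
    refine blockTriangular_vecMulVec_single.2 fun l hl => ?_
    by_cases hli : l = i <;> by_cases hlj : l = j <;> by_cases hlk : l = k <;> simp_all [r]
  have hc : (vecMulVec c (Pi.single j 1)).BlockTriangular b := by
    refine blockTriangular_vecMulVec_single_right.2 fun l hl => ?_
    by_cases hli : l = i <;> by_cases hlj : l = j <;> by_cases hlk : l = k <;> simp_all [c]
  have hrc : MulOrthogonal (vecMulVec (Pi.single i 1) r) (vecMulVec c (Pi.single j 1)) := by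
    rw [mulOrthogonal_vecMulVec_iff (by simpa using hri) (by simpa using hcj)]
    exact ⟨by linear_combination hdot t s (-u) (-(t - s * u)), by simp [hij]⟩
  have hφrc := h.mulOrthogonal_map (isRankOneIdempotent_vecMulVec_single hri) hr
    ⟨c, Pi.single j 1, by simpa using hcj, rfl⟩ hc hrc
  rw [h.map_vecMulVec_single_add_add hφ hij hik hkj.symm hbij hbik,
    h.map_vecMulVec_single_right_add_add hφ hkj hij hik.symm hbkj hbij,
    mulOrthogonal_vecMulVec_iff (by simp [hij, hik]) (by simp [hij.symm, hkj.symm])] at hφrc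
  have h₀ := hφrc.1
  rw [hdot] at h₀
  linear_combination h₀

theorem rowCoeff_mul (h : IsNormalizedPreserver b φ)
    (hφ : ∀ i j, i ≠ j → b i ≤ b j → MapsRows φ i j) (hik : i ≠ k) (hkj : k ≠ j) (hij : i ≠ j)
    (hbik : b i ≤ b k) (hbkj : b k ≤ b j) (s u : ℂ) :
    rowCoeff φ i j (s * u) = rowCoeff φ i k s * rowCoeff φ k j u := by
  rw [← h.rowCoeff_sub_rowCoeff hφ hik hkj hij hbik hbkj (s * u), sub_self, h.rowCoeff_zero hij,
    sub_zero]

theorem rowCoeff_add (h : IsNormalizedPreserver b φ) (hι : 3 ≤ Fintype.card ι)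
    (hφ : ∀ i j, i ≠ j → b i ≤ b j → MapsRows φ i j) (hij : i ≠ j) (hb : b i ≤ b j) (s t : ℂ) :
    rowCoeff φ i j (s + t) = rowCoeff φ i j s + rowCoeff φ i j t := by
  have hbetween {i j k : ι} (hik : i ≠ k) (hkj : k ≠ j) (hij : i ≠ j) (hbik : b i ≤ b k)
      (hbkj : b k ≤ b j) : rowCoeff φ i j (s + t) = rowCoeff φ i j s + rowCoeff φ i j t := by
    have hst := h.rowCoeff_sub_rowCoeff hφ hik hkj hij hbik hbkj (s + t) t 1
    rw [← h.rowCoeff_mul hφ hik hkj hij hbik hbkj, mul_one, add_sub_cancel_right] at hst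
    linear_combination hst
  obtain ⟨k, hki, hkj⟩ := exists_ne_and_ne hι i j
  rcases le_total (b k) (b i) with hbki | hbik
  · have hmul (u : ℂ) := h.rowCoeff_mul hφ hki hij hkj hbki hb 1 u
    simp only [one_mul] at hmul
    refine mul_left_cancel₀
      (h.rowCoeff_ne_zero (hφ k i hki hbki) hki hbki one_ne_zero) ?_
    rw [mul_add, ← hmul, ← hmul, ← hmul, hbetween hki hij hkj hbki hb]
  rcases le_total (b k) (b j) with hbkj | hbjk
  · exact hbetween hki.symm hkj hij hbik hbkj
  · have hmul (u : ℂ) := h.rowCoeff_mul hφ hij hkj.symm hki.symm hb hbjk u 1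
    simp only [mul_one] at hmul
    refine mul_right_cancel₀
      (h.rowCoeff_ne_zero (hφ j k hkj.symm hbjk) hkj.symm hbjk one_ne_zero) ?_
    rw [add_mul, ← hmul, ← hmul, ← hmul, hbetween hij hkj.symm hki.symm hb hbjk]

/-- Additivity makes `w * rowCoeff φ i j w⁻¹` constant along the sequence `w = 1 / ((n + 1) t)`,
while this number is an entry of `φ (w • rowIdempotent i j w⁻¹)`, hence tends to an entry of
`φ Eᵢⱼ`. -/
theorem rowCoeff_eq_mul (h : IsNormalizedPreserver b φ) (hι : 3 ≤ Fintype.card ι)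
    (hφ : ∀ i j, i ≠ j → b i ≤ b j → MapsRows φ i j) (hij : i ≠ j) (hb : b i ≤ b j) (t : ℂ) :
    rowCoeff φ i j t = φ (single i j 1) i j * t := by
  by_cases ht : t = 0
  · rw [ht, h.rowCoeff_zero hij, mul_zero]
  have hbR (s : ℂ) : (rowIdempotent i j s).BlockTriangular b :=
    blockTriangular_rowIdempotent fun _ => hb
  set f : ℂ →+ ℂ := ⟨⟨rowCoeff φ i j, h.rowCoeff_zero hij⟩, h.rowCoeff_add hι hφ hij hb⟩
  set w : ℕ → ℂ := fun n => ((n + 1) * t)⁻¹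
  have hw : Filter.Tendsto w Filter.atTop (nhdsWithin 0 {0}ᶜ) := by
    refine tendsto_nhdsWithin_iff.2 ⟨?_, .of_forall fun n =>
      inv_ne_zero (mul_ne_zero n.cast_add_one_ne_zero ht)⟩
    simpa [w, mul_inv, mul_comm] using
      (tendsto_one_div_add_atTop_nhds_zero_nat (𝕜 := ℂ)).const_mul t⁻¹
  have hconst (n : ℕ) : φ (w n • rowIdempotent i j (w n)⁻¹) i j = rowCoeff φ i j t / t := by
    have hf : rowCoeff φ i j ((n + 1) * t) = (n + 1) * rowCoeff φ i j t := by
      simpa [f, add_mul] using map_nsmul f (n + 1) t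
    have hn := n.cast_add_one_ne_zero (R := ℂ)
    rw [h.map_smul (isRankOneIdempotent_rowIdempotent hij) (hbR _)]
    calc w n * rowCoeff φ i j (w n)⁻¹ = ((n + 1) * t)⁻¹ * ((n + 1) * rowCoeff φ i j t) := by
          rw [inv_inv, hf]
      _ = rowCoeff φ i j t / t := by field_simp
  have hlim : Filter.Tendsto (fun n => φ (w n • rowIdempotent i j (w n)⁻¹)) Filter.atTop
      (nhds (φ (single i j 1))) :=
    (h.continuousOn _ (blockTriangular_single hb 1)).tendsto.comp (tendsto_nhdsWithin_iff.2
      ⟨(tendsto_smul_rowIdempotent i j).comp hw, .of_forall fun n =>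
        (blockTriangularSubalgebra ℂ ℂ b).smul_mem (hbR _) (w n)⟩)
  rw [← div_eq_iff ht]
  exact tendsto_nhds_unique (tendsto_const_nhds.congr fun n => (hconst n).symm)
    (((continuous_apply_apply i j).tendsto _).comp hlim)

theorem map_rowIdempotent_eq (h : IsNormalizedPreserver b φ) (hι : 3 ≤ Fintype.card ι)
    (hφ : ∀ i j, i ≠ j → b i ≤ b j → MapsRows φ i j) :
    ∃ c : ι → ℂ, (∀ i, c i ≠ 0) ∧ ∀ i j, i ≠ j → b i ≤ b j → ∀ t,
      φ (rowIdempotent i j t) = rowIdempotent i j (c i / c j * t) := by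
  obtain ⟨c, hc₀, hc⟩ := exists_eq_div_of_cocycle (b := b) hι (L := fun i j => rowCoeff φ i j 1)
    (fun i j hij hb => h.rowCoeff_ne_zero (hφ i j hij hb) hij hb one_ne_zero)
    fun i k j hik hkj hij hbik hbkj => by
      rw [← h.rowCoeff_mul hφ hik hkj hij hbik hbkj, mul_one]
  refine ⟨c, hc₀, fun i j hij hb t => ?_⟩
  rw [(hφ i j hij hb).map_rowIdempotent hij, ← hc i j hij hb, h.rowCoeff_eq_mul hι hφ hij hb,
    h.rowCoeff_eq_mul hι hφ hij hb, mul_one]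

end IsNormalizedPreserver

end Coefficients

section Rigidity

variable {ι α : Type*} [Fintype ι] [DecidableEq ι] [LinearOrder α] {b : ι → α}
  {φ : Matrix ι ι ℂ → Matrix ι ι ℂ} {i j k : ι} {u x y : ι → ℂ}

namespace IsNormalizedPreserver

theorem rowCoeff_eq_self (h : IsNormalizedPreserver b φ)
    (hφ : ∀ i j, i ≠ j → b i ≤ b j → ∀ t, φ (rowIdempotent i j t) = rowIdempotent i j t)
    (hij : i ≠ j) {t : ℂ} (ht : t ≠ 0 → b i ≤ b j) : rowCoeff φ i j t = t := by
  by_cases ht₀ : t = 0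
  · rw [ht₀, h.rowCoeff_zero hij]
  · rw [rowCoeff, hφ i j hij (ht ht₀), rowIdempotent_apply hij]

theorem map_vecMulVec_single_eq_self (h : IsNormalizedPreserver b φ)
    (hφ : ∀ i j, i ≠ j → b i ≤ b j → ∀ t, φ (rowIdempotent i j t) = rowIdempotent i j t)
    (hy : y i = 1) (hb : (vecMulVec (Pi.single i 1) y).BlockTriangular b) :
    φ (vecMulVec (Pi.single i 1) y) = vecMulVec (Pi.single i 1) y :=
  h.map_vecMulVec_single_of_mapsRows (fun i j hij hb t => ⟨t, (hφ i j hij hb t).symm⟩) hy hb hy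
    fun j hj => (h.rowCoeff_eq_self hφ hj.symm (blockTriangular_vecMulVec_single.1 hb j)).symm

theorem map_vecMulVec_single_right_eq_self (h : IsNormalizedPreserver b φ)
    (hφ : ∀ i j, i ≠ j → b i ≤ b j → ∀ t, φ (rowIdempotent i j t) = rowIdempotent i j t)
    (hx : x i = 1) (hb : (vecMulVec x (Pi.single i 1)).BlockTriangular b) :
    φ (vecMulVec x (Pi.single i 1)) = vecMulVec x (Pi.single i 1) :=
  h.map_vecMulVec_single_right_of_mapsRows (fun i j hij hb t => ⟨t, (hφ i j hij hb t).symm⟩)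
    hx hb hx fun j hj => by
      rw [h.rowCoeff_eq_self hφ hj fun hxj =>
        blockTriangular_vecMulVec_single_right.1 hb j (neg_ne_zero.1 hxj), neg_neg]

/-- The exceptional row `i` is recovered from row `j`: through the coboundary form of `φ` if
`b j ≤ b i`, and through the idempotents supported on column `j` otherwise. -/
theorem map_rowIdempotent_eq_self (h : IsNormalizedPreserver b φ) (hι : 3 ≤ Fintype.card ι)
    (hrow : ∀ k ≠ i, ∀ l, k ≠ l → b k ≤ b l → ∀ t,
      φ (rowIdempotent k l t) = rowIdempotent k l t)
    (hcol : ∀ j ≠ i, b i < b j → ∀ t, φ (rowIdempotent j i t)ᵀ = (rowIdempotent j i t)ᵀ)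
    (k l : ι) (hkl : k ≠ l) (hb : b k ≤ b l) (t : ℂ) :
    φ (rowIdempotent k l t) = rowIdempotent k l t := by
  rcases ne_or_eq k i with hki | rfl
  · exact hrow k hki l hkl hb t
  rcases le_or_gt (b l) (b k) with hlk | hkl'
  · have hφ : ∀ i j, i ≠ j → b i ≤ b j → MapsRows φ i j :=
      (h.forall_mapsRows_or hι).resolve_right fun h' =>
        h.mapsRows_not_transpose hkl.symm hlk
          (fun t => ⟨t, (hrow l hkl.symm k hkl.symm hlk t).symm⟩) (h' l k hkl.symm hlk)
    obtain ⟨c, -, hc⟩ := h.map_rowIdempotent_eq hι hφ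
    have hlk₁ : c l / c k = 1 := by
      have h₁ := congrFun₂ (hc l k hkl.symm hlk 1) l k
      rwa [hrow l hkl.symm k hkl.symm hlk, rowIdempotent_apply hkl.symm,
        rowIdempotent_apply hkl.symm, mul_one, eq_comm] at h₁
    rw [hc k l hkl hb, ← inv_div, hlk₁, inv_one, one_mul]
  · have hT := h.map_rowIdempotent_of_transpose hkl.symm hb (hcol l hkl.symm hkl' (-t))
    rwa [neg_neg] at hT

theorem map_shear_smul_vecMulVec_single (h : IsNormalizedPreserver b φ)
    (hφ : ∀ i j, i ≠ j → b i ≤ b j → ∀ t, φ (rowIdempotent i j t) = rowIdempotent i j t)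
    (hu : (Pi.single i 1 : ι → ℂ) ⬝ᵥ u = 0)
    (hub : (vecMulVec u (Pi.single i 1)).BlockTriangular b) (hk : k ≠ i) (hy : y k = 1)
    (hb : (vecMulVec (Pi.single k 1) y).BlockTriangular b) :
    φ (shear u (Pi.single i 1) hu • vecMulVec (Pi.single k 1) y) =
      shear u (Pi.single i 1) hu • vecMulVec (Pi.single k 1) y := by
  have hS := blockTriangular_shear_smul (h := hu) hub _ hb
  have hki : (Pi.single i 1 : ι → ℂ) ⬝ᵥ Pi.single k 1 = 0 := by simp [hk]
  rw [shear_smul_vecMulVec, hki, zero_smul, add_zero] at hS ⊢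
  exact h.map_vecMulVec_single_eq_self hφ (by simp [hk, hy]) hS

theorem map_shear_smul_vecMulVec_single_right (h : IsNormalizedPreserver b φ)
    (hφ : ∀ i j, i ≠ j → b i ≤ b j → ∀ t, φ (rowIdempotent i j t) = rowIdempotent i j t)
    (hu : (Pi.single i 1 : ι → ℂ) ⬝ᵥ u = 0)
    (hub : (vecMulVec u (Pi.single i 1)).BlockTriangular b) (huj : u j = 0) (hx : x j = 1)
    (hb : (vecMulVec x (Pi.single j 1)).BlockTriangular b) :
    φ (shear u (Pi.single i 1) hu • vecMulVec x (Pi.single j 1)) =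
      shear u (Pi.single i 1) hu • vecMulVec x (Pi.single j 1) := by
  have hS := blockTriangular_shear_smul (h := hu) hub _ hb
  have hju : (Pi.single j 1 : ι → ℂ) ⬝ᵥ u = 0 := by simp [huj]
  rw [shear_smul_vecMulVec, hju, zero_smul, sub_zero] at hS ⊢
  exact h.map_vecMulVec_single_right_eq_self hφ (by simp [huj, hx]) hS

/-- Every rank-one idempotent is a shear of one supported on a row, and `φ` conjugated by this
shear is again normalized and fixes the row idempotents. -/
theorem map_eq_self_of_isRankOneIdempotent (h : IsNormalizedPreserver b φ)
    (hι : 3 ≤ Fintype.card ι)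
    (hφ : ∀ i j, i ≠ j → b i ≤ b j → ∀ t, φ (rowIdempotent i j t) = rowIdempotent i j t)
    {P : Matrix ι ι ℂ} (hP : IsRankOneIdempotent P) (hPb : P.BlockTriangular b) : φ P = P := by
  obtain ⟨i, u, y, hu, hub, hy, hyb, rfl⟩ := hP.exists_eq_shear_smul_vecMulVec_single hPb
  set S := shear u (Pi.single i 1) hu
  have hui : u i = 0 := by simpa using hu
  have hψ : IsNormalizedPreserver b fun X => S⁻¹ • φ (S • X) :=
    { h.toIsCharpolyPreserver.conj (blockTriangular_shear_smul hub) S⁻¹ with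
      map_single := fun k => by
        rw [inv_smul_eq_iff, single_eq_single_vecMulVec_single]
        have hb : (vecMulVec (Pi.single k 1) (Pi.single k (1 : ℂ))).BlockTriangular b := by
          rw [← single_eq_single_vecMulVec_single]
          exact blockTriangular_single le_rfl 1
        rcases ne_or_eq k i with hk | rfl
        · exact h.map_shear_smul_vecMulVec_single hφ hu hub hk (by simp) hb
        · exact h.map_shear_smul_vecMulVec_single_right hφ hu hub hui (by simp) hb }
  have hrow (k l : ι) (hkl : k ≠ l) (hb : b k ≤ b l) (t : ℂ) :
      S⁻¹ • φ (S • rowIdempotent k l t) = rowIdempotent k l t :=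
    hψ.map_rowIdempotent_eq_self hι
      (fun k hk l hkl hb t => inv_smul_eq_iff.2 <|
        h.map_shear_smul_vecMulVec_single hφ hu hub hk (by simp [hkl])
          (blockTriangular_rowIdempotent fun _ => hb))
      (fun j hj hb t => inv_smul_eq_iff.2 <| by
        have hT := blockTriangular_transpose_rowIdempotent (t := t) fun _ => hb.le
        rw [transpose_rowIdempotent] at hT ⊢
        refine h.map_shear_smul_vecMulVec_single_right hφ hu hub ?_ (by simp [hj]) hT
        by_contra huj
        exact hb.not_ge (blockTriangular_vecMulVec_single_right.1 hub j huj)) k l hkl hb t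
  exact inv_smul_eq_iff.1 (hψ.map_vecMulVec_single_eq_self hrow hy hyb)

end IsNormalizedPreserver

end Rigidity

section RegularMatrices

variable {ι α : Type*} [Fintype ι] [DecidableEq ι] [LinearOrder α] {b : ι → α}
  {φ : Matrix ι ι ℂ → Matrix ι ι ℂ} {X : Matrix ι ι ℂ}

theorem exists_injective_eq_smul_diagonal (hX : X.discr ≠ 0) :
    ∃ (d : ι → ℂ) (S : ConjAct (Matrix ι ι ℂ)ˣ), Function.Injective d ∧ X = S • diagonal d := by
  have hcard : Nat.card (spectrum ℂ X) = Nat.card ι := by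
    rw [Nat.card_coe_set_eq, (discr_ne_zero_iff_card_spectrum X).1 hX, Nat.card_eq_fintype_card]
  have : Finite (spectrum ℂ X) := X.finite_spectrum
  obtain ⟨e⟩ := Finite.card_eq.1 hcard.symm
  set d : ι → ℂ := fun i => e i
  have hd : Function.Injective d := Subtype.val_injective.comp e.injective
  have hspec : spectrum ℂ (diagonal d) ⊆ spectrum ℂ X := by
    rw [spectrum_diagonal]
    exact Set.range_subset_iff.2 fun i => (e i).2
  obtain ⟨S, hS⟩ := exists_eq_conjAct_smul_diagonal hd
    (charpoly_eq_of_spectrum_subset ((discr_diagonal_ne_zero_iff d).2 hd) hspec).symm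
  exact ⟨d, S, hd, hS⟩

/-- `S • diagonal d'` is a polynomial in `S • diagonal d`. -/
theorem blockTriangular_smul_diagonal {S : ConjAct (Matrix ι ι ℂ)ˣ} {d : ι → ℂ}
    (hd : Function.Injective d) (hS : (S • diagonal d).BlockTriangular b) (d' : ι → ℂ) :
    (S • diagonal d' : Matrix ι ι ℂ).BlockTriangular b := by
  set p := Lagrange.interpolate Finset.univ d d'
  have hp : Polynomial.aeval d p = d' := by
    rw [Polynomial.aeval_pi_apply]
    exact funext fun i => Lagrange.eval_interpolate_at_node d' hd.injOn (Finset.mem_univ i)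
  set conj := (MulSemiringAction.toAlgHom ℂ (Matrix ι ι ℂ) S).comp (diagonalAlgHom ℂ)
  have hSp : S • diagonal d' = Polynomial.aeval (S • diagonal d) p := by
    rw [← hp]
    exact (Polynomial.aeval_algHom_apply conj d p).symm
  rw [hSp]
  exact Algebra.adjoin_singleton_le (S := blockTriangularSubalgebra ℂ ℂ b) hS
    (Polynomial.aeval_mem_adjoin_singleton ℂ _)

theorem diagonal_eq_sum_single (d : ι → ℂ) :
    diagonal d = ∑ k, d k • single k k (1 : ℂ) := by
  simp only [smul_single, smul_eq_mul, mul_one, sum_single_eq_diagonal]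

namespace IsCharpolyPreserver

theorem map_eq_self_of_discr_ne_zero (h : IsCharpolyPreserver b φ)
    (hφ : ∀ P, IsRankOneIdempotent P → P.BlockTriangular b → φ P = P)
    (hXb : X.BlockTriangular b) (hX : X.discr ≠ 0) : φ X = X := by
  obtain ⟨d, S, hd, rfl⟩ := exists_injective_eq_smul_diagonal hX
  have hS := blockTriangular_smul_diagonal hd hXb
  obtain ⟨T, hT⟩ := h.exists_frame hS
  have hTS (k : ι) : T • single k k (1 : ℂ) = S • single k k 1 := by
    rw [← diagonal_single, ← hT]
    refine hφ _ ?_ (hS _)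
    rw [diagonal_single]
    exact (IsRankOneIdempotent.single k).conj S
  rw [hT, diagonal_eq_sum_single, Finset.smul_sum, Finset.smul_sum]
  exact Finset.sum_congr rfl fun k _ => by rw [smul_comm T, smul_comm S, hTS]

theorem map_eq_self (h : IsCharpolyPreserver b φ)
    (hφ : ∀ P, IsRankOneIdempotent P → P.BlockTriangular b → φ P = P)
    (hXb : X.BlockTriangular b) : φ X = X := by
  obtain ⟨d, hd⟩ := exists_injective_complex ι
  have hdense := isPolynomialOnLines_discr.subset_closure_ne_zero
    (s := Subalgebra.toSubmodule (blockTriangularSubalgebra ℂ ℂ b))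
    (blockTriangular_diagonal d) ((discr_diagonal_ne_zero_iff d).2 hd)
  have hreg : Set.EqOn φ id
      {X : Matrix ι ι ℂ | X ∈ Subalgebra.toSubmodule (blockTriangularSubalgebra ℂ ℂ b) ∧
        X.discr ≠ 0} :=
    fun X hX => h.map_eq_self_of_discr_ne_zero hφ hX.1 hX.2
  exact hreg.of_subset_closure h.continuousOn continuousOn_id (fun X hX => hX.1) hdense hXb

end IsCharpolyPreserver

end RegularMatrices

section Structure

variable {ι α : Type*} [Fintype ι] [DecidableEq ι] [LinearOrder α] {b : ι → α}
  {φ : Matrix ι ι ℂ → Matrix ι ι ℂ}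

theorem exists_smul_rowIdempotent_eq {c : ι → ℂ} (hc : ∀ i, c i ≠ 0) :
    ∃ T : ConjAct (Matrix ι ι ℂ)ˣ, ∀ i j t,
      T • rowIdempotent i j t = rowIdempotent i j (c i / c j * t) := by
  refine ⟨ConjAct.toConjAct ⟨diagonal c, diagonal fun i => (c i)⁻¹, by simp [hc], by simp [hc]⟩,
    fun i j t => ?_⟩
  change diagonal c * rowIdempotent i j t * diagonal (fun i => (c i)⁻¹) = _
  have hi : (Pi.single i (c i) : ι → ℂ) = c i • Pi.single i 1 := by
    rw [← Pi.single_smul, smul_eq_mul, mul_one]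
  rw [rowIdempotent, rowIdempotent, mul_vecMulVec, vecMulVec_mul, add_vecMul,
    diagonal_mulVec_single, single_vecMul_diagonal, single_vecMul_diagonal, mul_one, hi,
    smul_vecMulVec, ← vecMulVec_smul, smul_add, ← Pi.single_smul, ← Pi.single_smul]
  congr 3
  · simp [hc]
  · rw [smul_eq_mul, div_mul_eq_mul_div, mul_div_assoc, div_eq_mul_inv]

theorem exists_transpose_smul_eq (T : ConjAct (Matrix ι ι ℂ)ˣ) :
    ∃ S : ConjAct (Matrix ι ι ℂ)ˣ, ∀ X : Matrix ι ι ℂ, (T • X)ᵀ = S • Xᵀ := by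
  set U := ConjAct.ofConjAct T
  refine ⟨ConjAct.toConjAct ⟨(↑U⁻¹ : Matrix ι ι ℂ)ᵀ, (U : Matrix ι ι ℂ)ᵀ, ?_, ?_⟩, fun X => ?_⟩
  · rw [← transpose_mul, U.mul_inv, transpose_one]
  · rw [← transpose_mul, U.inv_mul, transpose_one]
  · simp only [ConjAct.units_smul_def, transpose_mul, mul_assoc]
    rfl

theorem IsNormalizedPreserver.exists_smul_eq (h : IsNormalizedPreserver b φ)
    (hι : 3 ≤ Fintype.card ι) (hφ : ∀ i j, i ≠ j → b i ≤ b j → MapsRows φ i j) :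
    ∃ T : ConjAct (Matrix ι ι ℂ)ˣ, ∀ X, X.BlockTriangular b → φ X = T • X := by
  obtain ⟨c, hc₀, hc⟩ := h.map_rowIdempotent_eq hι hφ
  obtain ⟨T, hT⟩ := exists_smul_rowIdempotent_eq hc₀
  have hψ : IsNormalizedPreserver b fun X => T⁻¹ • φ X :=
    { h.toIsCharpolyPreserver.smul T⁻¹ with
      map_single := fun k => by
        rw [h.map_single, inv_smul_eq_iff, ← rowIdempotent_zero k k, hT, mul_zero] }
  refine ⟨T, fun X hX => inv_smul_eq_iff.1 (hψ.map_eq_self (fun P hP hPb => ?_) hX)⟩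
  refine hψ.map_eq_self_of_isRankOneIdempotent hι (fun i j hij hb t => ?_) hP hPb
  rw [hc i j hij hb, inv_smul_eq_iff, hT]

theorem IsCharpolyPreserver.exists_smul_eq_or (h : IsCharpolyPreserver b φ)
    (hι : 3 ≤ Fintype.card ι) :
    ∃ T : ConjAct (Matrix ι ι ℂ)ˣ, (∀ X, X.BlockTriangular b → φ X = T • X) ∨
      ∀ X, X.BlockTriangular b → φ X = T • Xᵀ := by
  obtain ⟨T, hT⟩ := h.exists_frame (S := 1) fun d => by
    rw [one_smul]
    exact blockTriangular_diagonal d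
  have hψ : IsNormalizedPreserver b fun X => T⁻¹ • φ X :=
    { h.smul T⁻¹ with
      map_single := fun k => by
        rw [inv_smul_eq_iff, ← diagonal_single, ← hT, one_smul] }
  rcases hψ.forall_mapsRows_or hι with hrow | hcol
  · obtain ⟨S, hS⟩ := hψ.exists_smul_eq hι hrow
    exact ⟨T * S, .inl fun X hX => by rw [mul_smul, ← hS X hX, smul_inv_smul]⟩
  · obtain ⟨S, hS⟩ := hψ.transpose.exists_smul_eq hι hcol
    obtain ⟨S', hS'⟩ := exists_transpose_smul_eq S
    refine ⟨T * S', .inr fun X hX => ?_⟩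
    rw [mul_smul, ← hS', ← hS X hX, transpose_transpose, smul_inv_smul]

end Structure

section ConjugatingMatrix

theorem exists_le_le_perm_apply {ι : Type*} [LinearOrder ι] [Finite ι] (σ : Equiv.Perm ι) (i : ι) :
    ∃ k ≤ i, i ≤ σ k := by
  by_contra! h
  have himage : σ '' Set.Iic i = Set.Iic i :=
    Set.eq_of_subset_of_ncard_le (Set.image_subset_iff.2 fun k hk => (h k hk).le)
      (Set.ncard_image_of_injective _ σ.injective).ge (Set.toFinite _)
  obtain ⟨k, hk, hki⟩ := himage.ge (Set.self_mem_Iic (a := i))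
  exact (h k hk).ne hki

variable {ι α β K : Type*} [Fintype ι] [LinearOrder ι] [LinearOrder α] [LinearOrder β] [Field K]
  {b : ι → α} {b' : ι → β} {T : ConjAct (Matrix ι ι K)ˣ}

theorem exists_perm_apply_ne_zero {M : Matrix ι ι K} (hM : IsUnit M) :
    ∃ σ : Equiv.Perm ι, ∀ i, M (σ i) i ≠ 0 := by
  have hdet := (M.isUnit_iff_isUnit_det.1 hM).ne_zero
  rw [det_apply'] at hdet
  obtain ⟨σ, -, hσ⟩ := Finset.exists_ne_zero_of_sum_ne_zero hdet
  exact ⟨σ, fun i => Finset.prod_ne_zero_iff.1 (right_ne_zero_of_mul hσ) i (Finset.mem_univ i)⟩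

theorem le_of_forall_blockTriangular_smul
    (hT : ∀ X : Matrix ι ι K, X.BlockTriangular b' → (T • X).BlockTriangular b) {i j k l : ι}
    (hij : b' i ≤ b' j) (hk : (ConjAct.ofConjAct T).val k i ≠ 0)
    (hl : (ConjAct.ofConjAct T)⁻¹.val j l ≠ 0) : b k ≤ b l := by
  by_contra! hlk
  have h := hT _ (blockTriangular_single hij 1) hlk
  rw [ConjAct.units_smul_def, single_eq_single_vecMulVec_single, mul_vecMulVec, vecMulVec_mul,
    vecMulVec_apply, mulVec_single_one, single_one_vecMul] at h
  exact mul_ne_zero hk hl h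

theorem exists_le_inv_apply_ne_zero (T : (Matrix ι ι K)ˣ) (i : ι) :
    ∃ j l, i ≤ j ∧ l ≤ i ∧ T⁻¹.val j l ≠ 0 := by
  obtain ⟨τ, hτ⟩ := exists_perm_apply_ne_zero (T⁻¹).isUnit
  obtain ⟨l, hl, hi⟩ := exists_le_le_perm_apply τ i
  exact ⟨τ l, l, hi, hl, hτ l⟩

theorem blockTriangular_of_forall_smul (hb : Monotone b) (hb' : Monotone b')
    (hT : ∀ X : Matrix ι ι K, X.BlockTriangular b' → (T • X).BlockTriangular b) :
    (ConjAct.ofConjAct T).val.BlockTriangular b := by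
  intro k i hik
  by_contra hk
  obtain ⟨j, l, hij, hli, hl⟩ := exists_le_inv_apply_ne_zero (ConjAct.ofConjAct T) i
  exact hik.not_ge
    ((le_of_forall_blockTriangular_smul hT (hb' hij) hk hl).trans (hb hli))

theorem blockTriangular_of_blockTriangular_of_forall_smul (hb : Monotone b) (hb' : Monotone b')
    (hT : ∀ X : Matrix ι ι K, X.BlockTriangular b' → (T • X).BlockTriangular b)
    {X : Matrix ι ι K} (hX : X.BlockTriangular b') : X.BlockTriangular b := by
  intro i j hji
  by_contra hij
  have hb'ij : b' i ≤ b' j := not_lt.1 fun h => hij (hX h)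
  obtain ⟨σ, hσ⟩ := exists_perm_apply_ne_zero (ConjAct.ofConjAct T).isUnit
  obtain ⟨k, hki, hik⟩ := exists_le_le_perm_apply σ i
  obtain ⟨m, l, hjm, hlj, hl⟩ := exists_le_inv_apply_ne_zero (ConjAct.ofConjAct T) j
  refine hji.not_ge (((hb hik).trans ?_).trans (hb hlj))
  exact le_of_forall_blockTriangular_smul hT
    ((hb' hki).trans (hb'ij.trans (hb' hjm))) (hσ k) hl

end ConjugatingMatrix

section SpectrumShrinking

variable {ι α : Type*} [Fintype ι] [DecidableEq ι] [LinearOrder α] {b : ι → α}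
  {φ : Matrix ι ι ℂ → Matrix ι ι ℂ}

theorem IsCharpolyPreserver.of_spectrum_subset
    (hmaps : Set.MapsTo φ {X | X.BlockTriangular b} {X | X.BlockTriangular b})
    (hcont : ContinuousOn φ {X | X.BlockTriangular b})
    (hinj : Set.InjOn φ {X | X.BlockTriangular b})
    (hcomm : ∀ X, X.BlockTriangular b → ∀ Y, Y.BlockTriangular b → Commute X Y →
      Commute (φ X) (φ Y))
    (hspec : ∀ X, X.BlockTriangular b → spectrum ℂ (φ X) ⊆ spectrum ℂ X) :
    IsCharpolyPreserver b φ where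
  continuousOn := hcont
  injOn := hinj
  commute hX hY := hcomm _ hX _ hY
  charpoly_eq := by
    obtain ⟨d, hd⟩ := exists_injective_complex ι
    exact charpoly_apply_eq_of_spectrum_subset
      (s := Subalgebra.toSubmodule (blockTriangularSubalgebra ℂ ℂ b))
      ⟨diagonal d, blockTriangular_diagonal d, (discr_diagonal_ne_zero_iff d).2 hd⟩
      hmaps hcont hinj hspec _

end SpectrumShrinking

section BlockAlgebra

variable {n : ℕ}

theorem monotone_blockIdx (k : List ℕ) : Monotone fun i : Fin n => blockIdx k i := fun _ _ hij =>
  Finset.card_le_card (Finset.monotone_filter_right _ fun _ _ hs => hs.trans hij)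

theorem exists_mem_blockAlg_smul_eq {k : List ℕ} {β : Type*} [LinearOrder β] {b' : Fin n → β}
    (hb' : Monotone b') {T : ConjAct (Matrix (Fin n) (Fin n) ℂ)ˣ}
    (hT : ∀ X : Matrix (Fin n) (Fin n) ℂ, X.BlockTriangular b' → T • X ∈ blockAlg n k) :
    ∃ S ∈ blockAlg n k, IsUnit S.det ∧ S⁻¹ ∈ blockAlg n k ∧
      ∀ X : Matrix (Fin n) (Fin n) ℂ, T • X = S * X * S⁻¹ := by
  have hTk : (ConjAct.ofConjAct T).val.BlockTriangular fun i : Fin n => blockIdx k i :=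
    blockTriangular_of_forall_smul (monotone_blockIdx k) hb' hT
  refine ⟨_, hTk, (isUnit_iff_isUnit_det _).1 (Units.isUnit _), ?_, fun X => ?_⟩
  · exact blockTriangular_inv_of_blockTriangular hTk
  · rw [ConjAct.units_smul_def, coe_units_inv]

theorem exchMat_eq_submatrix (n : ℕ) :
    exchMat n = (1 : Matrix (Fin n) (Fin n) ℂ).submatrix Fin.revPerm (Equiv.refl _) := by
  ext i j
  simp only [exchMat, of_apply, submatrix_apply, one_apply, Equiv.refl_apply, Fin.revPerm_apply,
    Fin.ext_iff, Fin.val_rev]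
  congr 1
  grind

theorem exchMat_mul_mul_exchMat (M : Matrix (Fin n) (Fin n) ℂ) :
    exchMat n * M * exchMat n = M.submatrix Fin.rev Fin.rev := by
  rw [exchMat_eq_submatrix, one_submatrix_mul, mul_submatrix_one]
  rfl

theorem exchMat_mul_exchMat (n : ℕ) : exchMat n * exchMat n = 1 := by
  rw [← submatrix_one Fin.rev Fin.rev_injective, ← exchMat_mul_mul_exchMat, mul_one]

/-- The exchange matrix `J`, acting on `M_n(ℂ)` by conjugation; thus `X^⊙` is
`exchConj n • Xᵀ`. -/
def exchConj (n : ℕ) : ConjAct (Matrix (Fin n) (Fin n) ℂ)ˣ :=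
  ConjAct.toConjAct ⟨exchMat n, exchMat n, exchMat_mul_exchMat n, exchMat_mul_exchMat n⟩

theorem exchConj_smul (M : Matrix (Fin n) (Fin n) ℂ) :
    exchConj n • M = exchMat n * M * exchMat n := rfl

theorem exchConj_smul_transpose_involutive :
    Function.Involutive fun X : Matrix (Fin n) (Fin n) ℂ => exchConj n • Xᵀ := fun X => by
  ext i j
  simp [exchConj_smul, exchMat_mul_mul_exchMat]

theorem blockTriangular_exchConj_smul_transpose_iff {α : Type*} [LinearOrder α] {b : Fin n → α}
    {X : Matrix (Fin n) (Fin n) ℂ} :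
    (exchConj n • Xᵀ).BlockTriangular (OrderDual.toDual ∘ b ∘ Fin.rev) ↔ X.BlockTriangular b := by
  rw [exchConj_smul, exchMat_mul_mul_exchMat]
  refine ⟨fun h i j hji => ?_, fun h => h.transpose.submatrix⟩
  simpa using @h j.rev i.rev (by simpa using hji)

variable {k : List ℕ} {T : ConjAct (Matrix (Fin n) (Fin n) ℂ)ˣ}

theorem monotone_toDual_blockIdx_rev (k : List ℕ) :
    Monotone (OrderDual.toDual ∘ (fun i : Fin n => blockIdx k i) ∘ Fin.rev) :=
  ((monotone_blockIdx k).comp_antitone Fin.rev_anti).dual_right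

theorem mul_inv_exchConj_smul_mem_blockAlg (hT : ∀ X ∈ blockAlg n k, T • Xᵀ ∈ blockAlg n k)
    (X : Matrix (Fin n) (Fin n) ℂ)
    (hX : X.BlockTriangular (OrderDual.toDual ∘ (fun i : Fin n => blockIdx k i) ∘ Fin.rev)) :
    (T * (exchConj n)⁻¹) • X ∈ blockAlg n k := by
  obtain ⟨Y, rfl⟩ := exchConj_smul_transpose_involutive.surjective X
  rw [mul_smul, inv_smul_smul]
  exact hT Y (blockTriangular_exchConj_smul_transpose_iff.1 hX)

theorem image_exchConj_smul_transpose_eq (hT : ∀ X ∈ blockAlg n k, T • Xᵀ ∈ blockAlg n k) :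
    (fun X : Matrix (Fin n) (Fin n) ℂ => exchConj n • Xᵀ) '' blockAlg n k = blockAlg n k := by
  have hmaps : Set.MapsTo (fun X : Matrix (Fin n) (Fin n) ℂ => exchConj n • Xᵀ)
      (blockAlg n k) (blockAlg n k) := fun X hX =>
    blockTriangular_of_blockTriangular_of_forall_smul (monotone_blockIdx k)
      (monotone_toDual_blockIdx_rev k) (mul_inv_exchConj_smul_mem_blockAlg hT)
      (blockTriangular_exchConj_smul_transpose_iff.2 hX)
  exact hmaps.image_subset.antisymm fun X hX =>
    ⟨_, hmaps hX, exchConj_smul_transpose_involutive X⟩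

theorem exists_mem_blockAlg_smul_transpose_eq (hT : ∀ X ∈ blockAlg n k, T • Xᵀ ∈ blockAlg n k) :
    ∃ S ∈ blockAlg n k, IsUnit S.det ∧ S⁻¹ ∈ blockAlg n k ∧
      ∀ X : Matrix (Fin n) (Fin n) ℂ, T • Xᵀ = S * (exchConj n • Xᵀ) * S⁻¹ := by
  obtain ⟨S, hS, hdet, hSinv, hTS⟩ := exists_mem_blockAlg_smul_eq
    (monotone_toDual_blockIdx_rev k) (mul_inv_exchConj_smul_mem_blockAlg hT)
  refine ⟨S, hS, hdet, hSinv, fun X => ?_⟩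
  rw [← hTS, mul_smul, inv_smul_smul]

end BlockAlgebra

theorem spectrum_shrinking_self_map {n : ℕ} (hn : 3 ≤ n) (𝒜 : Set (Matrix (Fin n) (Fin n) ℂ))
    (h𝒜 : IsBlockUT n 𝒜)
    (φ : Matrix (Fin n) (Fin n) ℂ → Matrix (Fin n) (Fin n) ℂ)
    (hmaps : ∀ X ∈ 𝒜, φ X ∈ 𝒜)
    (hcont : ContinuousOn φ 𝒜)
    (hinj : Set.InjOn φ 𝒜)
    (hcomm : ∀ X ∈ 𝒜, ∀ Y ∈ 𝒜, X * Y = Y * X → φ X * φ Y = φ Y * φ X)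
    (hspec : ∀ X ∈ 𝒜, spectrum ℂ (φ X) ⊆ spectrum ℂ X) :
    (∃ T ∈ 𝒜, IsUnit T.det ∧ T⁻¹ ∈ 𝒜 ∧
      ∀ X ∈ 𝒜, φ X = T * X * T⁻¹) ∨
    ((fun X : Matrix (Fin n) (Fin n) ℂ => exchMat n * Xᵀ * exchMat n) '' 𝒜 = 𝒜 ∧
      ∃ T ∈ 𝒜, IsUnit T.det ∧ T⁻¹ ∈ 𝒜 ∧
        ∀ X ∈ 𝒜, φ X = T * (exchMat n * Xᵀ * exchMat n) * T⁻¹) := by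
  obtain ⟨k, -, -, rfl⟩ := h𝒜
  have hφ : IsCharpolyPreserver (fun i : Fin n => blockIdx k i) φ :=
    .of_spectrum_subset hmaps hcont hinj hcomm hspec
  obtain ⟨T, hT | hT⟩ := hφ.exists_smul_eq_or (by simpa using hn)
  · obtain ⟨S, hS, hdet, hSinv, hTS⟩ := exists_mem_blockAlg_smul_eq
      (monotone_blockIdx k) fun X hX => hT X hX ▸ hmaps X hX
    exact .inl ⟨S, hS, hdet, hSinv, fun X hX => (hT X hX).trans (hTS X)⟩
  · have hTmaps (X) (hX : X ∈ blockAlg n k) : T • Xᵀ ∈ blockAlg n k := hT X hX ▸ hmaps X hX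
    obtain ⟨S, hS, hdet, hSinv, hTS⟩ := exists_mem_blockAlg_smul_transpose_eq hTmaps
    exact .inr ⟨image_exchConj_smul_transpose_eq hTmaps, S, hS, hdet, hSinv,
      fun X hX => (hT X hX).trans (hTS X)⟩
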